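/- arXiv:2310.09287 — 13 statements merged into one kernel-verified Lean document; each statement's English description precedes it below -/
import Mathlib

section
/- Let S = ⟨n₁, n₂, …, n_e⟩ be a numerical semigroup with minimal generators n₁ < n₂ < ⋯ < n_e and n₁ ≥ 2. If S is a MANS-semigroup, then n₂ mod n₁ < n₃ mod n₁ < ⋯ < n_e mod n₁. -/
/-- `S ⊆ ℕ` is a numerical semigroup: contains `0`, closed under addition,
and has finite complement in `ℕ`. -/
def IsNumSgp (S : Set ℕ) : Prop :=
  0 ∈ S ∧ (∀ a ∈ S, ∀ b ∈ S, a + b ∈ S) ∧ Sᶜ.Finite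

/-- `⟨A⟩`: the additive submonoid of `ℕ` generated by `A`, viewed as a set. -/
def gen (A : Set ℕ) : Set ℕ := (AddSubmonoid.closure A : Set ℕ)

/-- The multiplicity `m(S)`: the least nonzero element of `S`. -/
noncomputable def nsMult (S : Set ℕ) : ℕ := sInf {x | x ∈ S ∧ x ≠ 0}

/-- The minimal system of generators of `S`: the nonzero elements of `S` that are
not a sum of two nonzero elements of `S`. -/
def msg (S : Set ℕ) : Set ℕ :=
  {x | x ∈ S ∧ x ≠ 0 ∧ ∀ a ∈ S, a ≠ 0 → ∀ b ∈ S, b ≠ 0 → x ≠ a + b}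

/-- The ratio `r(S)`: the second smallest minimal generator of `S`. -/
noncomputable def nsRatio (S : Set ℕ) : ℕ := sInf (msg S \ {nsMult S})

/-- The maximum minimal generator `M(S)`. -/
noncomputable def nsMaxGen (S : Set ℕ) : ℕ := sSup (msg S)

/-- The Apéry set `Ap(S, n) = {s ∈ S : s - n ∉ S}`. -/
def AperySet (S : Set ℕ) (n : ℕ) : Set ℕ :=
  {s | s ∈ S ∧ ¬ ∃ y ∈ S, y + n = s}

/-- `w(i)`: the least element of `S` congruent to `i` modulo `n`. -/
noncomputable def aperyW (S : Set ℕ) (n i : ℕ) : ℕ :=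
  sInf {s | s ∈ S ∧ s % n = i % n}

/-- A MANS-semigroup: a numerical semigroup whose Apéry set with respect to the
multiplicity is monotone, i.e. `w(1) < w(2) < ⋯ < w(m(S) - 1)`. -/
def IsMANS (S : Set ℕ) : Prop :=
  IsNumSgp S ∧ ∀ i : ℕ, 0 < i → i + 1 < nsMult S →
    aperyW S (nsMult S) i < aperyW S (nsMult S) (i + 1)

/-- The Frobenius number `F(S)`: the greatest integer not in `S`. -/
noncomputable def nsFrob (S : Set ℕ) : ℕ := sSup {x | x ∉ S}

/-- The genus `g(S)`: the number of gaps of `S`. -/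
noncomputable def nsGenus (S : Set ℕ) : ℕ := Set.ncard {x | x ∉ S}

/-- The set of pseudo-Frobenius numbers of `S`: integers `x ∉ S` such that
`x + s ∈ S` for every nonzero `s ∈ S`. -/
def nsPF (S : Set ℕ) : Set ℤ :=
  {x : ℤ | x ∉ ((Nat.cast : ℕ → ℤ) '' S) ∧
    ∀ s ∈ S, s ≠ 0 → x + (s : ℤ) ∈ ((Nat.cast : ℕ → ℤ) '' S)}

/-- The type `t(S)`: the number of pseudo-Frobenius numbers of `S`. -/
noncomputable def nsType (S : Set ℕ) : ℕ := (nsPF S).ncard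

/-- `S` is pseudo-symmetric iff `F(S) = 2 g(S) - 2`. -/
def IsPseudoSymmetric (S : Set ℕ) : Prop :=
  (nsFrob S : ℤ) = 2 * (nsGenus S : ℤ) - 2

theorem aux_key (S : Set ℕ) (hS : IsNumSgp S) (m : ℕ) (hm : m ∈ S) (hm0 : 0 < m)
    (x : ℕ) (hx : x ∈ msg S) (hxm : x ≠ m) :
    ∀ s ∈ S, s % m = x % m → x ≤ s := by
  obtain ⟨h0, hadd, -⟩ := hS
  have hmul : ∀ k : ℕ, m * k ∈ S := by
    intro k
    induction k with
    | zero => simpa using h0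
    | succ k ih => rw [Nat.mul_succ]; exact hadd _ ih _ hm
  obtain ⟨hxS, hx0, hxi⟩ := hx
  intro s hs hmod
  by_contra! hlt
  obtain ⟨k, hk⟩ : m ∣ x - s := (Nat.modEq_iff_dvd' hlt.le).1 hmod
  rcases k with _ | k
  · simp at hk; omega
  have hx' : x = m + (s + m * k) := by rw [Nat.mul_succ] at hk; omega
  exact hxi m hm hm0.ne' (s + m * k) (hadd _ hs _ (hmul k)) (by omega) hx'

theorem stmt0 (S : Set ℕ) (e : ℕ) (he : 2 ≤ e) (n : Fin e → ℕ)
    (hS : IsNumSgp S) (hmono : StrictMono n) (hmsg : msg S = Set.range n)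
    (h2 : 2 ≤ n ⟨0, by omega⟩) (hM : IsMANS S) :
    ∀ i j : Fin e, 0 < (i : ℕ) → i < j →
      n i % n ⟨0, by omega⟩ < n j % n ⟨0, by omega⟩ := by
  have hn : ∀ i, n i ∈ msg S := fun i => hmsg ▸ Set.mem_range_self i
  have hm : nsMult S = n ⟨0, by omega⟩ := by
    have hne : {x | x ∈ S ∧ x ≠ 0}.Nonempty :=
      ⟨n ⟨0, by omega⟩, (hn _).1, (hn _).2.1⟩
    have hle : ∀ a ∈ S, a ≠ 0 → nsMult S ≤ a := fun a ha h => Nat.sInf_le ⟨ha, h⟩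
    have hmem : nsMult S ∈ S ∧ nsMult S ≠ 0 := Nat.sInf_mem hne
    have hmm : nsMult S ∈ msg S := by
      refine ⟨hmem.1, hmem.2, fun a ha ha0 b hb hb0 h => ?_⟩
      have := hle a ha ha0
      omega
    rw [hmsg] at hmm
    obtain ⟨i, hi⟩ := hmm
    apply le_antisymm (hle _ (hn _).1 (hn _).2.1)
    rw [← hi]
    exact hmono.monotone (Fin.mk_le_of_le_val (Nat.zero_le _))
  obtain ⟨-, hM⟩ := hM
  rw [hm] at hM
  have hlt : ∀ i : Fin e, 0 < (i : ℕ) → n ⟨0, by omega⟩ < n i := fun i hi =>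
    hmono (Fin.mk_lt_of_lt_val hi)
  have hm0 := (hn ⟨0, by omega⟩).1
  generalize n ⟨0, by omega⟩ = m at *
  have hkey : ∀ i : Fin e, 0 < (i : ℕ) → ∀ s ∈ S, s % m = n i % m → n i ≤ s := fun i hi =>
    aux_key S hS m hm0 (by omega) (n i) (hn i) (hlt i hi).ne'
  have hw : ∀ i : Fin e, 0 < (i : ℕ) → aperyW S m (n i % m) = n i := by
    intro i hi
    apply le_antisymm
    · exact Nat.sInf_le ⟨(hn i).1, by simp⟩
    · have hne : {s | s ∈ S ∧ s % m = n i % m % m}.Nonempty := ⟨n i, (hn i).1, by simp⟩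
      have := Nat.sInf_mem hne
      exact hkey i hi _ this.1 (this.2.trans (Nat.mod_mod _ _))
  have hmon : ∀ a b : ℕ, 0 < a → a ≤ b → b < m → aperyW S m a ≤ aperyW S m b := by
    intro a b ha hab
    induction b, hab using Nat.le_induction with
    | base => intro _; exact le_rfl
    | succ b hb ih =>
      intro h
      exact (ih (by omega)).trans (hM b (by omega) h).le
  intro i j hi hij
  have hj : 0 < (j : ℕ) := lt_trans hi hij
  by_contra! hcon
  have hpos : 0 < n j % m := by
    by_contra! h
    have h1 := hkey j hj 0 hS.1 (by simp; omega)
    have := (hn j).2.1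
    omega
  have := hmon _ _ hpos hcon (Nat.mod_lt _ (by omega))
  rw [hw i hi, hw j hj] at this
  exact absurd (hmono hij) (by omega)
end

section
/- Let S be a numerical semigroup with m(S) ≥ 2. If S is a MANS-semigroup, then there exists a positive integer a such that r(S) = a·m(S) + 1. -/
theorem stmt1 (S : Set ℕ) (hS : IsNumSgp S) (hm : 2 ≤ nsMult S) (hM : IsMANS S) :
    ∃ a : ℕ, 1 ≤ a ∧ nsRatio S = a * nsMult S + 1 := by
  obtain ⟨h0, hadd, hfin⟩ := hS
  obtain ⟨-, hmono⟩ := hM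
  obtain ⟨N, hN⟩ := hfin.bddAbove
  have hbig : ∀ x, N < x → x ∈ S := by
    intro x hx
    by_contra h
    have := hN h
    omega
  have hmS : nsMult S ∈ S ∧ nsMult S ≠ 0 :=
    Nat.sInf_mem (s := {x | x ∈ S ∧ x ≠ 0}) ⟨N + 1, hbig _ (by omega), by omega⟩
  have hmle : ∀ x ∈ S, x ≠ 0 → nsMult S ≤ x := fun x hx hx0 =>
    Nat.sInf_le (s := {x | x ∈ S ∧ x ≠ 0}) ⟨hx, hx0⟩
  have hw : aperyW S (nsMult S) 1 ∈ S ∧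
      aperyW S (nsMult S) 1 % nsMult S = 1 % nsMult S := by
    refine Nat.sInf_mem (s := {s | s ∈ S ∧ s % nsMult S = 1 % nsMult S})
      ⟨1 + nsMult S * (N + 1), hbig _ ?_, by simp⟩
    nlinarith
  have hwle : ∀ x ∈ S, aperyW S (nsMult S) (x % nsMult S) ≤ x := fun x hx =>
    Nat.sInf_le (s := {s | s ∈ S ∧ s % nsMult S = (x % nsMult S) % nsMult S})
      ⟨hx, by simp⟩
  unfold nsRatio
  generalize nsMult S = m at *
  have hmon : ∀ i, i + 1 < m → aperyW S m 1 ≤ aperyW S m (i + 1) := by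
    intro i
    induction i with
    | zero => intro _; exact le_rfl
    | succ k ih =>
      intro h
      exact (ih (by omega)).trans (hmono (k + 1) (by omega) h).le
  have hlow : ∀ x ∈ S, x % m ≠ 0 → aperyW S m 1 ≤ x := by
    intro x hx hx0
    have hlt := Nat.mod_lt x (show m > 0 by omega)
    have h1 := hmon (x % m - 1) (by omega)
    rw [Nat.sub_add_cancel (by omega)] at h1
    exact h1.trans (hwle x hx)
  generalize aperyW S m 1 = w at *
  obtain ⟨hwS, hw1⟩ := hw
  rw [Nat.mod_eq_of_lt (by omega : 1 < m)] at hw1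
  have hw0 : w ≠ 0 := by rintro rfl; simp at hw1
  have hwm : w ≠ m := by rintro rfl; simp at hw1
  have hmul : ∀ k, m * k ∈ S := by
    intro k
    induction k with
    | zero => simpa using h0
    | succ k ih => rw [Nat.mul_succ]; exact hadd _ ih _ hmS.1
  have hr : sInf (msg S \ {m}) = w := by
    refine IsLeast.csInf_eq ⟨⟨⟨hwS, hw0, ?_⟩, hwm⟩, ?_⟩
    · intro a ha ha0 b hb hb0 hab
      have h1 : a % m = 0 := by
        by_contra h
        have := hlow a ha h
        omega
      have h2 : b % m = 0 := by
        by_contra h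
        have := hlow b hb h
        omega
      rw [hab, Nat.add_mod, h1, h2] at hw1
      simp at hw1
    · rintro x ⟨⟨hxS, hx0, hx⟩, hxm⟩
      apply hlow x hxS
      intro h
      obtain ⟨k, rfl⟩ := Nat.dvd_of_mod_eq_zero h
      match k with
      | 0 => simp at hx0
      | 1 => simp at hxm
      | k + 2 =>
        refine hx m hmS.1 hmS.2 (m * (k + 1)) (hmul _) ?_ (by ring)
        exact Nat.mul_ne_zero hmS.2 (by omega)
  refine ⟨w / m, Nat.div_pos (hmle w hwS hw0) (by omega), ?_⟩
  have hd := Nat.div_add_mod w m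
  rw [hw1, mul_comm] at hd
  exact hr.trans hd.symm
end

section
/- Let S = ⟨n₁, n₂⟩ be a numerical semigroup with 2 ≤ n₁ < n₂ (i.e. gcd(n₁,n₂)=1). Then S is a MANS-semigroup if and only if there exists a positive integer a such that n₂ = a·n₁ + 1. -/
theorem mem_gen_pair (n1 n2 x : ℕ) :
    x ∈ gen {n1, n2} ↔ ∃ p q : ℕ, p * n1 + q * n2 = x := by
  simp [gen, AddSubmonoid.mem_closure_pair]

theorem mult_gen_pair (n1 n2 : ℕ) (h1 : 2 ≤ n1) (h12 : n1 < n2) :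
    nsMult (gen {n1, n2}) = n1 := by
  have hm : n1 ∈ {x | x ∈ gen {n1, n2} ∧ x ≠ 0} :=
    ⟨(mem_gen_pair _ _ _).2 ⟨1, 0, by simp⟩, by omega⟩
  apply le_antisymm (Nat.sInf_le hm)
  obtain ⟨hx, h0⟩ := Nat.sInf_mem ⟨_, hm⟩
  obtain ⟨p, q, h⟩ := (mem_gen_pair _ _ _).1 hx
  rw [← h] at h0 ⊢
  rcases Nat.eq_zero_or_pos p with rfl | hp
  · rcases Nat.eq_zero_or_pos q with rfl | hq
    · simp at h0
    · nlinarith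
  · nlinarith [Nat.zero_le (q * n2)]

theorem stmt2 (n1 n2 : ℕ) (h1 : 2 ≤ n1) (h12 : n1 < n2) (hgcd : Nat.gcd n1 n2 = 1) :
    IsMANS (gen {n1, n2}) ↔ ∃ a : ℕ, 1 ≤ a ∧ n2 = a * n1 + 1 := by
  have hmult := mult_gen_pair n1 n2 h1 h12
  constructor
  · rintro ⟨-, hM⟩
    rw [hmult] at hM
    have hmono : ∀ k, k + 2 < n1 →
        aperyW (gen {n1, n2}) n1 1 < aperyW (gen {n1, n2}) n1 (k + 2) := by
      intro k
      induction k with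
      | zero => intro hk; exact hM 1 (by omega) (by omega)
      | succ k ih => intro hk; exact (ih (by omega)).trans (hM (k + 2) (by omega) (by omega))
    have hdm := Nat.div_add_mod n2 n1
    have hlt := Nat.mod_lt n2 (show n1 > 0 by omega)
    have hr0 : n2 % n1 ≠ 0 := by
      intro h
      have := Nat.gcd_eq_left (Nat.dvd_of_mod_eq_zero h)
      omega
    have hr : n2 % n1 = 1 := by
      by_contra hne
      obtain ⟨k, hk⟩ : ∃ k, n2 % n1 = k + 2 := ⟨n2 % n1 - 2, by omega⟩
      have hw := hmono k (by omega)
      have hle : aperyW (gen {n1, n2}) n1 (k + 2) ≤ n2 := by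
        apply Nat.sInf_le
        refine ⟨(mem_gen_pair _ _ _).2 ⟨0, 1, by simp⟩, ?_⟩
        rw [← hk, Nat.mod_mod]
      have hne : {s | s ∈ gen {n1, n2} ∧ s % n1 = 1 % n1}.Nonempty := by
        obtain ⟨m, hm⟩ := Nat.exists_mul_mod_eq_one_of_coprime
          (show Nat.Coprime n2 n1 from (Nat.gcd_comm _ _).trans hgcd) (by omega)
        refine ⟨n2 * m, (mem_gen_pair _ _ _).2 ⟨0, m, by ring⟩, ?_⟩
        rw [hm.2, Nat.mod_eq_of_lt (by omega)]
      obtain ⟨hx, hx1⟩ := Nat.sInf_mem hne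
      change aperyW (gen {n1, n2}) n1 1 % n1 = _ at hx1
      obtain ⟨p, q, h⟩ := (mem_gen_pair _ _ _).1 hx
      change _ = aperyW (gen {n1, n2}) n1 1 at h
      rw [← h] at hw hx1
      rcases Nat.eq_zero_or_pos q with rfl | hq
      · rw [Nat.mod_eq_of_lt (show 1 < n1 by omega)] at hx1
        simp at hx1
      · nlinarith [Nat.zero_le (p * n1)]
    refine ⟨n2 / n1, Nat.div_pos h12.le (by omega), ?_⟩
    rw [mul_comm]; omega
  · rintro ⟨a, ha, rfl⟩
    have hmod : ∀ p q, (p * n1 + q * (a * n1 + 1)) % n1 = q % n1 := by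
      intro p q
      rw [show p * n1 + q * (a * n1 + 1) = q + n1 * (p + q * a) by ring, Nat.add_mul_mod_self_left]
    have hw : ∀ i, i < n1 → aperyW (gen {n1, a * n1 + 1}) n1 i = i * (a * n1 + 1) := by
      intro i hi
      have hm : i * (a * n1 + 1) ∈ {s | s ∈ gen {n1, a * n1 + 1} ∧ s % n1 = i % n1} :=
        ⟨(mem_gen_pair _ _ _).2 ⟨0, i, by simp⟩, by simpa using hmod 0 i⟩
      apply le_antisymm (Nat.sInf_le hm)
      apply le_csInf ⟨_, hm⟩
      rintro x ⟨hx, hx1⟩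
      obtain ⟨p, q, rfl⟩ := (mem_gen_pair _ _ _).1 hx
      rw [hmod, Nat.mod_eq_of_lt hi] at hx1
      have : i ≤ q := hx1 ▸ Nat.mod_le q n1
      exact (Nat.mul_le_mul_right _ this).trans (Nat.le_add_left _ _)
    refine ⟨⟨AddSubmonoid.zero_mem _, fun x hx y hy => AddSubmonoid.add_mem _ hx hy, ?_⟩, ?_⟩
    · apply (Set.finite_Iio (n1 * (a * n1 + 1))).subset
      intro x hx
      by_contra hge
      simp only [Set.mem_Iio, not_lt] at hge
      apply hx
      have hlt := Nat.mod_lt x (show n1 > 0 by omega)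
      have hle : x % n1 * (a * n1 + 1) ≤ x := (Nat.mul_le_mul_right _ hlt.le).trans hge
      have hd : n1 ∣ x - x % n1 * (a * n1 + 1) := by
        apply (Nat.modEq_iff_dvd' hle).1
        have := hmod 0 (x % n1)
        simp only [zero_mul, zero_add, Nat.mod_mod] at this
        exact this
      obtain ⟨c, hc⟩ := hd
      refine (mem_gen_pair _ _ _).2 ⟨c, x % n1, ?_⟩
      rw [mul_comm c]; omega
    · rw [hmult]
      intro i hi hi1
      rw [hw i (by omega), hw (i + 1) hi1]
      exact Nat.mul_lt_mul_of_pos_right (by omega) (by omega)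
end

section
/- If S is a MANS-semigroup with embedding dimension e(S) = 3, then there exist natural numbers m, a, b, t with m ≥ 3, a ≥ 1, t ∈ {2, …, m−1}, (t−1)(am+1) < bm+t < t(am+1), such that the three minimal generators of S are (m(S), r(S), M(S)) = (m, am+1, bm+t). -/
theorem stmt3_aux (S : Set ℕ) (hM : IsMANS S) (r M : ℕ) (hlt : r < M)
    (hset : msg S \ {nsMult S} = {r, M}) (hmm : nsMult S ∈ msg S)
    (hmin : ∀ x ∈ S, x ≠ 0 → nsMult S ≤ x) :
    ∃ m a b t : ℕ, 3 ≤ m ∧ 1 ≤ a ∧ 2 ≤ t ∧ t ≤ m - 1 ∧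
      (t - 1) * (a * m + 1) < b * m + t ∧ b * m + t < t * (a * m + 1) ∧
      nsMult S = m ∧ nsRatio S = a * m + 1 ∧ nsMaxGen S = b * m + t := by
  obtain ⟨⟨h0, hadd, hfin⟩, hmono⟩ := hM
  have hrat : nsRatio S = r := by
    unfold nsRatio
    rw [hset]
    apply IsLeast.csInf_eq
    refine ⟨by simp, ?_⟩
    rintro x (rfl | rfl)
    · exact le_rfl
    · exact hlt.le
  have hmsg : ∀ x ∈ msg S, x = nsMult S ∨ x = r ∨ x = M := by
    intro x hx
    by_cases h : x = nsMult S
    · exact Or.inl h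
    · have : x ∈ msg S \ {nsMult S} := ⟨hx, h⟩
      rw [hset] at this
      exact Or.inr this
  have hr' : r ∈ msg S \ {nsMult S} := by rw [hset]; simp
  have hM' : M ∈ msg S \ {nsMult S} := by rw [hset]; simp
  obtain ⟨hr, hrm⟩ := hr'
  obtain ⟨hMM, hMm⟩ := hM'
  have hmax : nsMaxGen S = M := by
    unfold nsMaxGen
    apply IsGreatest.csSup_eq
    refine ⟨hMM, ?_⟩
    intro x hx
    rcases hmsg x hx with h | h | h
    · rw [h]; exact hmin M hMM.1 hMM.2.1
    · omega
    · omega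
  rw [hrat, hmax]
  clear hset hrat hmax
  generalize nsMult S = m at *
  simp only [Set.mem_singleton_iff] at hrm hMm
  have hm0 : m ≠ 0 := hmm.2.1
  have hmul : ∀ k, ∀ x ∈ S, k * x ∈ S := by
    intro k x hx
    induction k with
    | zero => simpa using h0
    | succ k ih => rw [Nat.succ_mul]; exact hadd _ ih _ hx
  have hdec : ∀ n, ∀ x, x < n → x ∈ S → ∃ α β γ, x = α * m + β * r + γ * M := by
    intro n
    induction n with
    | zero => intro x hx; omega
    | succ n ih =>
      intro x hx hxS
      by_cases hx0 : x = 0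
      · exact ⟨0, 0, 0, by simp [hx0]⟩
      by_cases hg : x ∈ msg S
      · rcases hmsg x hg with h | h | h
        · exact ⟨1, 0, 0, by simp [h]⟩
        · exact ⟨0, 1, 0, by simp [h]⟩
        · exact ⟨0, 0, 1, by simp [h]⟩
      · have : ∃ a ∈ S, a ≠ 0 ∧ ∃ b ∈ S, b ≠ 0 ∧ x = a + b := by
          by_contra hc
          push Not at hc
          exact hg ⟨hxS, hx0, hc⟩
        obtain ⟨a, ha, ha0, b, hb, hb0, rfl⟩ := this
        obtain ⟨a1, a2, a3, h1⟩ := ih a (by omega) ha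
        obtain ⟨b1, b2, b3, h2⟩ := ih b (by omega) hb
        exact ⟨a1 + b1, a2 + b2, a3 + b3, by rw [h1, h2]; ring⟩
  -- nonempty residue classes
  have hne : ∀ i, {s | s ∈ S ∧ s % m = i % m}.Nonempty := by
    intro i
    obtain ⟨N, hN⟩ := hfin.bddAbove
    refine ⟨i + m * (N + 1), ?_, by simp⟩
    by_contra hc
    have h1 := hN hc
    have : N + 1 ≤ m * (N + 1) := Nat.le_mul_of_pos_left _ (by omega)
    omega
  have hw : ∀ i, aperyW S m i ∈ S ∧ aperyW S m i % m = i % m := fun i => Nat.sInf_mem (hne i)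
  have hwle : ∀ i s, s ∈ S → s % m = i % m → aperyW S m i ≤ s :=
    fun i s hs h => Nat.sInf_le ⟨hs, h⟩
  have hg0 : ∀ g ∈ msg S, g ≠ m → g % m ≠ 0 := by
    intro g hg hgm h
    obtain ⟨k, rfl⟩ := Nat.dvd_of_mod_eq_zero h
    rcases k with _ | _ | k
    · exact hg.2.1 (by simp)
    · simp at hgm
    · exact hg.2.2 m hmm.1 hm0 ((k + 1) * m) (hmul _ _ hmm.1)
        (by simp [hm0]) (by ring)
  have hgw : ∀ g ∈ msg S, g ≠ m → aperyW S m (g % m) = g := by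
    intro g hg hgm
    have h1 := hw (g % m)
    have h2 := hwle (g % m) g hg.1 (by simp)
    rcases h2.lt_or_eq with h3 | h3
    · exfalso
      generalize aperyW S m (g % m) = w at *
      have h4 : (g - w) % m = 0 := by
        apply Nat.sub_mod_eq_zero_of_mod_eq
        rw [h1.2]; simp
      obtain ⟨k, hk⟩ := Nat.dvd_of_mod_eq_zero h4
      refine hg.2.2 w h1.1 ?_ (k * m) (hmul _ _ hmm.1) ?_ ?_
      · rintro rfl
        have := hg0 g hg hgm
        simp at h1
        omega
      · rw [mul_comm, ← hk]; omega
      · rw [mul_comm, ← hk]; omega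
    · exact h3
  have hmono1 : ∀ i, i + 1 < m → aperyW S m 1 ≤ aperyW S m (i + 1) := by
    intro i
    induction i with
    | zero => intro _; exact le_rfl
    | succ i ih =>
      intro h
      exact (ih (by omega)).trans (hmono (i + 1) (by omega) h).le
  have hrw := hgw r hr hrm
  have hMw := hgw M hMM hMm
  have hr0 := hg0 r hr hrm
  have hM0 := hg0 M hMM hMm
  have hrlt := Nat.mod_lt r (Nat.pos_of_ne_zero hm0)
  have hMlt := Nat.mod_lt M (Nat.pos_of_ne_zero hm0)
  have hneq : r % m ≠ M % m := by
    intro h; rw [h] at hrw; omega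
  have hm3 : 3 ≤ m := by omega
  have h1m : 1 % m = 1 := Nat.mod_eq_of_lt (by omega)
  have hw1 : aperyW S m 1 = r := by
    apply le_antisymm
    · have := hmono1 (r % m - 1) (by omega)
      rwa [Nat.sub_add_cancel (by omega), hrw] at this
    · have h1 := hw 1
      obtain ⟨α, β, γ, h⟩ := hdec _ _ (Nat.lt_succ_self _) h1.1
      rcases Nat.eq_zero_or_pos β with hb | hb
      · rcases Nat.eq_zero_or_pos γ with hc | hc
        · exfalso
          rw [h, hb, hc] at h1
          simp [h1m] at h1
        · nlinarith
      · nlinarith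
  have hrm1 : r % m = 1 := by
    have := (hw 1).2
    rwa [hw1, h1m] at this
  have hkr : ∀ k, (k * r) % m = k % m := by
    intro k
    rw [Nat.mul_mod, hrm1, mul_one, Nat.mod_mod]
  have hra : r / m * m + 1 = r := by
    have := Nat.div_add_mod r m
    rw [hrm1, mul_comm] at this; exact this
  have hMb : M / m * m + M % m = M := by
    have := Nat.div_add_mod M m
    rw [mul_comm] at this; exact this
  have hmr := hmin r hr.1 hr.2.1
  refine ⟨m, r / m, M / m, M % m, hm3, Nat.div_pos hmr (by omega), by omega, by omega, ?_, ?_,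
    rfl, hra.symm, hMb.symm⟩
  · rw [hra, hMb]
    have ht2 : 2 ≤ M % m := by omega
    have h1 := hmono (M % m - 1) (by omega) (by omega)
    rw [Nat.sub_add_cancel (by omega), hMw] at h1
    refine lt_of_le_of_lt ?_ h1
    have h2 := hw (M % m - 1)
    obtain ⟨α, β, γ, h⟩ := hdec _ _ (Nat.lt_succ_self _) h2.1
    generalize aperyW S m (M % m - 1) = w at *
    have hc : γ = 0 := by
      by_contra hc
      have : 1 ≤ γ := by omega
      nlinarith
    have h3 : β % m = M % m - 1 := by
      rw [← hkr β]
      have h4 := h2.2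
      rw [Nat.mod_eq_of_lt (show M % m - 1 < m by omega), h, hc] at h4
      simpa using h4
    have h5 : M % m - 1 ≤ β := h3 ▸ Nat.mod_le _ _
    calc (M % m - 1) * r ≤ β * r := Nat.mul_le_mul_right _ h5
      _ ≤ w := by rw [h]; nlinarith
  · rw [hra, hMb]
    have h1 := hwle (M % m) (M % m * r) (hmul _ _ hr.1) (hkr _)
    rw [hMw] at h1
    refine lt_of_le_of_ne h1 ?_
    intro h
    obtain ⟨u, hu⟩ : ∃ u, M % m = u + 2 := ⟨M % m - 2, by omega⟩
    rw [hu] at h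
    refine hMM.2.2 r hr.1 hr.2.1 ((u + 1) * r) (hmul _ _ hr.1) ?_ ?_
    · simp [hr.2.1]
    · rw [h]; ring

theorem stmt3 (S : Set ℕ) (hM : IsMANS S) (he : (msg S).ncard = 3) :
    ∃ m a b t : ℕ, 3 ≤ m ∧ 1 ≤ a ∧ 2 ≤ t ∧ t ≤ m - 1 ∧
      (t - 1) * (a * m + 1) < b * m + t ∧ b * m + t < t * (a * m + 1) ∧
      nsMult S = m ∧ nsRatio S = a * m + 1 ∧ nsMaxGen S = b * m + t := by
  have hne : (msg S).Nonempty := by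
    apply Set.nonempty_of_ncard_ne_zero; omega
  obtain ⟨g, hg⟩ := hne
  have hmS : nsMult S ∈ {x | x ∈ S ∧ x ≠ 0} := Nat.sInf_mem ⟨g, hg.1, hg.2.1⟩
  have hmin : ∀ x ∈ S, x ≠ 0 → nsMult S ≤ x := fun x hx h => Nat.sInf_le ⟨hx, h⟩
  have hmm : nsMult S ∈ msg S := by
    refine ⟨hmS.1, hmS.2, ?_⟩
    intro a ha ha0 b hb hb0 h
    have := hmin a ha ha0
    omega
  have h2 : (msg S \ {nsMult S}).ncard = 2 := by
    rw [Set.ncard_sdiff_singleton_of_mem hmm, he]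
  obtain ⟨x, y, hxy, hset⟩ := Set.ncard_eq_two.1 h2
  rcases lt_or_gt_of_ne hxy with h | h
  · exact stmt3_aux S hM x y h hset hmm hmin
  · exact stmt3_aux S hM y x h (by rw [hset, Set.pair_comm]) hmm hmin
end

section
/- Let m, a, b, t be natural numbers with m ≥ 3, a ≥ 1, t ∈ {2, …, m−1}, and (t−1)(am+1) < bm+t < t(am+1). Then S = ⟨m, am+1, bm+t⟩ is a numerical semigroup with embedding dimension e(S) = 3. -/
theorem mem_gen3 (p q r s : ℕ) :
    s ∈ gen {p, q, r} ↔ ∃ x y z : ℕ, s = x * p + y * q + z * r := by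
  constructor
  · intro h
    refine AddSubmonoid.closure_induction (motive := fun s _ => ∃ x y z : ℕ, s = x * p + y * q + z * r)
      ?_ ?_ ?_ h
    · intro u hu
      rcases hu with rfl | rfl | rfl
      · exact ⟨1, 0, 0, by ring⟩
      · exact ⟨0, 1, 0, by ring⟩
      · exact ⟨0, 0, 1, by ring⟩
    · exact ⟨0, 0, 0, by ring⟩
    · rintro u v _ _ ⟨x, y, z, rfl⟩ ⟨x', y', z', rfl⟩
      exact ⟨x + x', y + y', z + z', by ring⟩
  · rintro ⟨x, y, z, rfl⟩
    have hp : p ∈ AddSubmonoid.closure ({p, q, r} : Set ℕ) :=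
      AddSubmonoid.subset_closure (by simp)
    have hq : q ∈ AddSubmonoid.closure ({p, q, r} : Set ℕ) :=
      AddSubmonoid.subset_closure (by simp)
    have hr : r ∈ AddSubmonoid.closure ({p, q, r} : Set ℕ) :=
      AddSubmonoid.subset_closure (by simp)
    have := add_mem (add_mem (nsmul_mem hp x) (nsmul_mem hq y)) (nsmul_mem hr z)
    simpa [gen] using this

theorem msg_gen3 (p q r : ℕ) (hp : 0 < p) (hpq : p < q) (hqr : q < r)
    (hq : ∀ x, q ≠ x * p) (hr : ∀ x y, r ≠ x * p + y * q) :
    msg (gen {p, q, r}) = {p, q, r} := by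
  have low : ∀ u ∈ gen {p, q, r}, u ≠ 0 → p ≤ u := by
    intro u hu h0
    obtain ⟨x, y, z, rfl⟩ := (mem_gen3 _ _ _ _).1 hu
    rcases Nat.eq_zero_or_pos x with rfl | hx
    · rcases Nat.eq_zero_or_pos y with rfl | hy
      · rcases Nat.eq_zero_or_pos z with rfl | hz
        · simp at h0
        · nlinarith
      · nlinarith [Nat.zero_le (z * r)]
    · nlinarith [Nat.zero_le (z * r), Nat.zero_le (y * q)]
  have lowr : ∀ u ∈ gen {p, q, r}, u < r → ∃ x y, u = x * p + y * q := by
    intro u hu h0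
    obtain ⟨x, y, z, rfl⟩ := (mem_gen3 _ _ _ _).1 hu
    rcases Nat.eq_zero_or_pos z with rfl | hz
    · exact ⟨x, y, by ring⟩
    · nlinarith [Nat.zero_le (x * p), Nat.zero_le (y * q)]
  have lowq : ∀ u ∈ gen {p, q, r}, u < q → ∃ x, u = x * p := by
    intro u hu h0
    obtain ⟨x, y, rfl⟩ := lowr u hu (h0.trans hqr)
    rcases Nat.eq_zero_or_pos y with rfl | hz
    · exact ⟨x, by ring⟩
    · nlinarith [Nat.zero_le (x * p)]
  ext s
  constructor
  · rintro ⟨hs, h0, hd⟩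
    obtain ⟨x, y, z, e⟩ := (mem_gen3 _ _ _ _).1 hs
    have key : ∀ g ∈ ({p, q, r} : Set ℕ), ∀ w ∈ gen {p, q, r}, s = g + w → s = g := by
      intro g hg w hw e
      by_contra hne
      refine hd g (AddSubmonoid.subset_closure hg) ?_ w hw ?_ e
      · rcases hg with rfl | rfl | rfl <;> omega
      · rintro rfl; exact hne e
    rcases x with _ | x
    · rcases y with _ | y
      · rcases z with _ | z
        · simp at e; exact absurd e h0
        · have := key r (by simp) (z * r) ((mem_gen3 _ _ _ _).2 ⟨0, 0, z, by ring⟩)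
            (by rw [e]; ring)
          simp [this]
      · have := key q (by simp) (y * q + z * r) ((mem_gen3 _ _ _ _).2 ⟨0, y, z, by ring⟩)
          (by rw [e]; ring)
        simp [this]
    · have := key p (by simp) (x * p + y * q + z * r) ((mem_gen3 _ _ _ _).2 ⟨x, y, z, by ring⟩)
        (by rw [e]; ring)
      simp [this]
  · intro hs
    refine ⟨AddSubmonoid.subset_closure hs, ?_, ?_⟩
    · rcases hs with rfl | rfl | rfl <;> omega
    · intro u hu hu0 v hv hv0 e
      have l1 := low u hu hu0
      have l2 := low v hv hv0
      rcases hs with rfl | rfl | rfl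
      · omega
      · obtain ⟨x, hx⟩ := lowq u hu (by omega)
        obtain ⟨y, hy⟩ := lowq v hv (by omega)
        exact hq (x + y) (by rw [add_mul, ← hx, ← hy]; exact e)
      · obtain ⟨x, x', hx⟩ := lowr u hu (by omega)
        obtain ⟨y, y', hy⟩ := lowr v hv (by omega)
        refine hr (x + y) (x' + y') ?_
        calc s = u + v := e
          _ = _ := by rw [hx, hy]; ring

theorem stmt4 (m a b t : ℕ) (hm : 3 ≤ m) (ha : 1 ≤ a) (ht2 : 2 ≤ t) (htm : t ≤ m - 1)
    (h1 : (t - 1) * (a * m + 1) < b * m + t) (h2 : b * m + t < t * (a * m + 1)) :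
    IsNumSgp (gen {m, a * m + 1, b * m + t}) ∧
      (msg (gen {m, a * m + 1, b * m + t})).ncard = 3 := by
  constructor
  · refine ⟨zero_mem (AddSubmonoid.closure _),
      fun u hu v hv => add_mem (S := AddSubmonoid ℕ) hu hv, ?_⟩
    refine (Set.finite_lt_nat (m * (a * m + 1))).subset ?_
    intro n hn
    by_contra hlt
    simp only [Set.mem_ofPred_eq, not_lt] at hlt
    apply hn
    rw [mem_gen3]
    have hmod : n % m < m := Nat.mod_lt _ (by omega)
    have hdiv := Nat.div_add_mod n m
    have hle : n % m * a ≤ n / m := by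
      have h3 : n % m * a ≤ m * a := Nat.mul_le_mul_right _ hmod.le
      have h4 : m * a ≤ n / m := by
        rw [Nat.le_div_iff_mul_le (by omega)]
        nlinarith
      omega
    obtain ⟨k, hk⟩ := Nat.exists_eq_add_of_le hle
    refine ⟨k, n % m, 0, ?_⟩
    calc n = m * (n / m) + n % m := hdiv.symm
      _ = _ := by rw [hk]; ring
  · have hpq : m < a * m + 1 := by nlinarith
    have hqr : a * m + 1 < b * m + t := by
      have : 1 * (a * m + 1) ≤ (t - 1) * (a * m + 1) := Nat.mul_le_mul_right _ (by omega)
      omega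
    rw [msg_gen3 _ _ _ (by omega) hpq hqr]
    · rw [Set.ncard_eq_three]
      exact ⟨_, _, _, by omega, by omega, by omega, rfl⟩
    · intro x hx
      have := congrArg (· % m) hx
      simp [Nat.add_mod, Nat.mod_eq_of_lt (show 1 < m by omega)] at this
    · intro x y hxy
      have h3 : t % m = y % m := by
        have e : b * m + t = (x + y * a) * m + y := by rw [hxy]; ring
        have := congrArg (· % m) e
        simpa [Nat.add_mod] using this
      rw [Nat.mod_eq_of_lt (by omega)] at h3
      have h4 : t ≤ y := h3 ▸ Nat.mod_le y m
      have := Nat.mul_le_mul_right (a * m + 1) h4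
      have := Nat.zero_le (x * m)
      omega
end

section
/- Let m, a, b, t be natural numbers with m ≥ 3, a ≥ 1, t ∈ {2, …, m−1}, (t−1)(am+1) < bm+t < t(am+1), and S = ⟨m, am+1, bm+t⟩. If λ is a positive integer with (λ−1)t < m ≤ λt, then λ(bm+t) ∉ Ap(S, m). -/
theorem stmt5 (m a b t : ℕ) (hm : 3 ≤ m) (ha : 1 ≤ a) (ht2 : 2 ≤ t) (htm : t ≤ m - 1)
    (h1 : (t - 1) * (a * m + 1) < b * m + t) (h2 : b * m + t < t * (a * m + 1))
    (l : ℕ) (hl : 1 ≤ l) (hl1 : (l - 1) * t < m) (hl2 : m ≤ l * t) :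
    l * (b * m + t) ∉ AperySet (gen {m, a * m + 1, b * m + t}) m := by
  rintro ⟨-, h⟩
  apply h
  obtain ⟨r, hr⟩ := Nat.exists_eq_add_of_le hl2
  obtain ⟨l', rfl⟩ := Nat.exists_eq_add_of_le' hl
  obtain ⟨t', rfl⟩ := Nat.exists_eq_add_of_le' (by omega : 1 ≤ t)
  simp only [Nat.add_sub_cancel] at hl1 h1
  have hrt : r ≤ t' := by nlinarith
  have e1 : r * (a * m + 1) ≤ t' * (a * m + 1) := Nat.mul_le_mul_right _ hrt
  have e2 : r * (a * m + 1) < (l' + 1) * (b * m + (t' + 1)) := by nlinarith [Nat.zero_le (l' * (b * m + (t' + 1)))]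
  have e3 : (r * a) * m < ((l' + 1) * b + 1) * m := by nlinarith
  have e4 : r * a ≤ (l' + 1) * b := Nat.lt_succ_iff.mp (lt_of_mul_lt_mul_right e3 (Nat.zero_le _))
  obtain ⟨k, hk⟩ := Nat.exists_eq_add_of_le e4
  refine ⟨r * (a * m + 1) + k * m, ?_, ?_⟩
  · have g1 : a * m + 1 ∈ AddSubmonoid.closure ({m, a * m + 1, b * m + (t' + 1)} : Set ℕ) :=
      AddSubmonoid.subset_closure (by simp)
    have g2 : m ∈ AddSubmonoid.closure ({m, a * m + 1, b * m + (t' + 1)} : Set ℕ) :=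
      AddSubmonoid.subset_closure (by simp)
    have := add_mem (nsmul_mem g1 r) (nsmul_mem g2 k)
    simpa only [gen, smul_eq_mul, SetLike.mem_coe] using this
  · have : (l' + 1) * (b * m + (t' + 1)) = ((l' + 1) * b) * m + (l' + 1) * (t' + 1) := by ring
    rw [this, hk, hr]; ring
end

section
/- Let m, a, b, t be natural numbers with m ≥ 3, a ≥ 1, t ∈ {2, …, m−1}, (t−1)(am+1) < bm+t < t(am+1), and S = ⟨m, am+1, bm+t⟩. If λ ∈ ℕ and λt ≥ m, then λ(bm+t) ∉ Ap(S, m). -/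
theorem stmt6 (m a b t : ℕ) (hm : 3 ≤ m) (ha : 1 ≤ a) (ht2 : 2 ≤ t) (htm : t ≤ m - 1)
    (h1 : (t - 1) * (a * m + 1) < b * m + t) (h2 : b * m + t < t * (a * m + 1))
    (l : ℕ) (hl : m ≤ l * t) :
    l * (b * m + t) ∉ AperySet (gen {m, a * m + 1, b * m + t}) m := by
  rintro ⟨-, hn⟩
  apply hn
  have hex : ∃ k, m ≤ k * t := ⟨l, hl⟩
  obtain ⟨k, hk, hmin⟩ : ∃ k, m ≤ k * t ∧ ∀ j < k, ¬ m ≤ j * t :=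
    ⟨Nat.find hex, Nat.find_spec hex, fun j hj => Nat.find_min hex hj⟩
  have hkl : k ≤ l := by
    by_contra h
    exact hmin l (by omega) hl
  obtain ⟨c, rfl⟩ := Nat.exists_eq_add_of_le hkl
  have hk0 : k ≠ 0 := by
    rintro rfl
    omega
  obtain ⟨j, rfl⟩ := Nat.exists_eq_succ_of_ne_zero hk0
  have hj := hmin j (by omega)
  obtain ⟨r, hr⟩ := Nat.exists_eq_add_of_le hk
  obtain ⟨s, rfl⟩ : ∃ s, t = s + 1 := ⟨t - 1, by omega⟩
  have hrs : r ≤ s := by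
    rw [Nat.succ_mul] at hr
    omega
  have hb : s * a ≤ b := by
    by_contra h
    have h3 : (b + 1) * m ≤ s * a * m := Nat.mul_le_mul_right m (by omega)
    simp only [Nat.add_sub_cancel] at h1
    nlinarith
  have hra : r * a ≤ (j + 1) * b := by
    calc r * a ≤ s * a := Nat.mul_le_mul_right a hrs
      _ ≤ b := hb
      _ ≤ (j + 1) * b := by nlinarith [Nat.zero_le (j * b)]
  obtain ⟨d, hd⟩ := Nat.exists_eq_add_of_le hra
  have g : ∀ x ∈ ({m, a * m + 1, b * m + (s + 1)} : Set ℕ), ∀ n : ℕ,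
      n * x ∈ AddSubmonoid.closure ({m, a * m + 1, b * m + (s + 1)} : Set ℕ) := by
    intro x hx n
    rw [← smul_eq_mul]
    exact AddSubmonoid.nsmul_mem _ (AddSubmonoid.subset_closure hx) n
  refine ⟨c * (b * m + (s + 1)) + r * (a * m + 1) + d * m, ?_, ?_⟩
  · exact add_mem (add_mem (g _ (by simp) _) (g _ (by simp) _)) (g _ (by simp) _)
  · simp only [Nat.succ_eq_add_one] at *
    zify at hd hr ⊢
    linear_combination - (m : ℤ) * hd - hr
end

section
/- Let m, a, b, t be natural numbers with m ≥ 3, a ≥ 1, t ∈ {2, …, m−1}, (t−1)(am+1) < bm+t < t(am+1), and S = ⟨m, am+1, bm+t⟩. If μ ∈ ℕ and μ ≥ t, then μ(am+1) ∉ Ap(S, m). -/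
theorem stmt7 (m a b t : ℕ) (hm : 3 ≤ m) (ha : 1 ≤ a) (ht2 : 2 ≤ t) (htm : t ≤ m - 1)
    (h1 : (t - 1) * (a * m + 1) < b * m + t) (h2 : b * m + t < t * (a * m + 1))
    (μ : ℕ) (hμ : t ≤ μ) :
    μ * (a * m + 1) ∉ AperySet (gen {m, a * m + 1, b * m + t}) m := by
  rintro ⟨_, hn⟩
  apply hn
  have hb : b < t * a := by
    have h3 : b * m < (t * a) * m := by nlinarith
    exact lt_of_mul_lt_mul_right h3 (Nat.zero_le m)
  obtain ⟨c, hc⟩ := Nat.exists_eq_add_of_lt hb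
  obtain ⟨d, rfl⟩ := Nat.exists_eq_add_of_le hμ
  refine ⟨d * (a * m + 1) + (b * m + t) + c * m, ?_, ?_⟩
  · unfold gen
    have g : ∀ x ∈ ({m, a * m + 1, b * m + t} : Set ℕ),
        x ∈ AddSubmonoid.closure ({m, a * m + 1, b * m + t} : Set ℕ) :=
      fun x hx => AddSubmonoid.subset_closure hx
    have e1 := AddSubmonoid.nsmul_mem _ (g (a * m + 1) (by simp)) d
    have e2 := AddSubmonoid.nsmul_mem _ (g m (by simp)) c
    rw [smul_eq_mul] at e1 e2
    exact add_mem (add_mem e1 (g (b * m + t) (by simp))) e2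
  · have h4 : t * (a * m + 1) = (t * a) * m + t := by ring
    rw [add_mul t d, h4, hc]
    ring
end

section
/- Let m, a, b, t be natural numbers with m ≥ 3, a ≥ 1, t ∈ {2, …, m−1}, (t−1)(am+1) < bm+t < t(am+1), and S = ⟨m, am+1, bm+t⟩. Writing Ap(S, m) = {w(0), w(1), …, w(m−1)} with w(i) the least element of S congruent to i modulo m, one has w(i) = ⌊i/t⌋·(bm+t) + (i mod t)·(am+1) for every i ∈ {0, 1, …, m−1}. -/
theorem stmt8_mono (t A B : ℕ) (ht : 0 < t) (h : (t - 1) * A ≤ B) :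
    Monotone (fun n : ℕ => (n / t) * B + (n % t) * A) := by
  apply monotone_nat_of_le_succ
  intro n
  show (n / t) * B + (n % t) * A ≤ ((n + 1) / t) * B + ((n + 1) % t) * A
  have hd := Nat.div_add_mod n t
  have hl := Nat.mod_lt n ht
  generalize n / t = q at *
  generalize n % t = r at *
  subst hd
  rcases Nat.lt_or_ge (r + 1) t with hr | hr
  · have e1 : (t * q + r + 1) / t = q := by
      rw [add_assoc, Nat.mul_add_div ht, Nat.div_eq_of_lt hr]; simp
    have e2 : (t * q + r + 1) % t = r + 1 := by
      rw [add_assoc, Nat.mul_add_mod, Nat.mod_eq_of_lt hr]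
    rw [e1, e2]; nlinarith
  · obtain rfl : t = r + 1 := by omega
    have e1 : ((r + 1) * q + r + 1) / (r + 1) = q + 1 := by
      rw [add_assoc, Nat.mul_add_div ht, Nat.div_self ht]
    have e2 : ((r + 1) * q + r + 1) % (r + 1) = 0 := by
      rw [add_assoc, Nat.mul_add_mod, Nat.mod_self]
    rw [e1, e2]
    simp only [Nat.add_sub_cancel] at h
    nlinarith

theorem stmt8_gen (m A B s : ℕ) (hs : s ∈ gen {m, A, B}) :
    ∃ x y z : ℕ, s = x * m + y * A + z * B := by
  unfold gen at hs
  induction hs using AddSubmonoid.closure_induction with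
  | mem u hu =>
    rcases hu with rfl | rfl | rfl
    · exact ⟨1, 0, 0, by simp⟩
    · exact ⟨0, 1, 0, by simp⟩
    · exact ⟨0, 0, 1, by simp⟩
  | zero => exact ⟨0, 0, 0, by simp⟩
  | add u v _ _ hu hv =>
    obtain ⟨x, y, z, rfl⟩ := hu
    obtain ⟨x', y', z', rfl⟩ := hv
    exact ⟨x + x', y + y', z + z', by ring⟩

theorem stmt8 (m a b t : ℕ) (hm : 3 ≤ m) (ha : 1 ≤ a) (ht2 : 2 ≤ t) (htm : t ≤ m - 1)
    (h1 : (t - 1) * (a * m + 1) < b * m + t) (h2 : b * m + t < t * (a * m + 1)) :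
    ∀ i : ℕ, i < m →
      aperyW (gen {m, a * m + 1, b * m + t}) m i =
        (i / t) * (b * m + t) + (i % t) * (a * m + 1) := by
  intro i hi
  have ht : 0 < t := by omega
  have hmono := stmt8_mono t (a * m + 1) (b * m + t) ht h1.le
  have key : ∀ y z : ℕ, y * (a * m + 1) + z * (b * m + t) ≡ y + t * z [MOD m] := by
    intro y z
    have e : y * (a * m + 1) + z * (b * m + t) = (y + t * z) + m * (y * a + z * b) := by ring
    rw [e]
    simp [Nat.ModEq]
  apply IsLeast.csInf_eq
  refine ⟨⟨?_, ?_⟩, ?_⟩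
  · unfold gen
    refine add_mem ?_ ?_
    · rw [← smul_eq_mul]
      exact nsmul_mem (AddSubmonoid.subset_closure (by simp)) _
    · rw [← smul_eq_mul]
      exact nsmul_mem (AddSubmonoid.subset_closure (by simp)) _
  · have := key (i % t) (i / t)
    rw [Nat.mod_add_div] at this
    rw [add_comm]
    exact this
  · rintro s ⟨hs, hsi⟩
    obtain ⟨x, y, z, rfl⟩ := stmt8_gen _ _ _ _ hs
    have hk := key y z
    have h3 : (y + t * z) % m = i := by
      rw [← hk, ← Nat.mod_eq_of_lt hi, ← hsi, add_assoc, Nat.mul_add_mod_self_right]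
    have hle : i ≤ y + t * z := h3 ▸ Nat.mod_le _ _
    refine (hmono hle).trans ?_
    show ((y + t * z) / t) * (b * m + t) + ((y + t * z) % t) * (a * m + 1) ≤ _
    rw [Nat.add_mul_div_left _ _ ht, Nat.add_mul_mod_self_left]
    have hd := Nat.div_add_mod y t
    generalize y / t = q at *
    generalize y % t = r at *
    have h4 := Nat.mul_le_mul_left q h2.le
    generalize a * m + 1 = A at *
    generalize b * m + t = B at *
    subst hd
    nlinarith [Nat.zero_le (x * m)]
end

section
/- Let S = ⟨m, am+1, bm+t⟩ be a MANS-semigroup with embedding dimension 3, where m ≥ 3, a ≥ 1, t ∈ {2, …, m−1}, and (t−1)(am+1) < bm+t < t(am+1). Set q = ⌊(m−1)/t⌋ and r = (m−1) mod t. Then the genus of S is g(S) = (qt(t−1) + r(r+1))/(2m) · (am+1) + (qt(q−1) + 2q(r+1))/(2m) · (bm+t) − (m−1)/2; equivalently, g(S) = (qt(t−1)+r(r+1))·a/2 + (qt(q−1)+2q(r+1))·b/2. -/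
def ff (a b t s : ℕ) : ℕ := (s % t) * a + (s / t) * b

lemma ff_step (a b t s : ℕ) (ht : 2 ≤ t) (hb : (t - 1) * a ≤ b) : ff a b t s ≤ ff a b t (s + 1) := by
  unfold ff
  have h1 := Nat.div_add_mod s t
  have h3 := Nat.mod_lt s (show 0 < t by omega)
  generalize hA : s / t = A at *
  generalize hR : s % t = R at *
  by_cases h : R + 1 < t
  · have e : s + 1 = (R + 1) + t * A := by omega
    have e1 : (s + 1) % t = R + 1 := by
      rw [e, Nat.add_mul_mod_self_left, Nat.mod_eq_of_lt h]
    have e2 : (s + 1) / t = A := by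
      rw [e, Nat.add_mul_div_left _ _ (by omega), Nat.div_eq_of_lt h, zero_add]
    rw [e1, e2]; nlinarith
  · have e : s + 1 = t * (A + 1) := by rw [mul_add]; omega
    have e1 : (s + 1) % t = 0 := by rw [e, Nat.mul_mod_right]
    have e2 : (s + 1) / t = A + 1 := by rw [e, Nat.mul_div_cancel_left _ (by omega)]
    have : R = t - 1 := by omega
    rw [e1, e2, this]; nlinarith

lemma ff_mono (a b t : ℕ) (ht : 2 ≤ t) (hb : (t - 1) * a ≤ b) : Monotone (ff a b t) :=
  monotone_nat_of_le_succ fun s => ff_step a b t s ht hb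

lemma ff_le (a b t u v : ℕ) (ht : 2 ≤ t) (hb : b ≤ t * a) : ff a b t (u + v * t) ≤ u * a + v * b := by
  unfold ff
  rw [Nat.add_mul_mod_self_right, Nat.add_mul_div_right _ _ (by omega)]
  have h1 := Nat.div_add_mod u t
  generalize u / t = A at *
  generalize u % t = R at *
  subst h1
  nlinarith [Nat.mul_le_mul_left A hb]

lemma mem_iff (m a b t n : ℕ) (hm : 0 < m) (ht : 2 ≤ t) (hb : b ≤ t * a) (hb' : (t - 1) * a ≤ b) :
    n ∈ gen {m, a * m + 1, b * m + t} ↔ ff a b t (n % m) ≤ n / m := by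
  constructor
  · intro h
    have : ∃ x u v, n = x * m + u * (a * m + 1) + v * (b * m + t) := by
      unfold gen at h
      refine AddSubmonoid.closure_induction (motive := fun n _ => ∃ x u v, n = x * m + u * (a * m + 1) + v * (b * m + t)) ?_ ?_ ?_ h
      · rintro x (rfl | rfl | rfl)
        · exact ⟨1, 0, 0, by ring⟩
        · exact ⟨0, 1, 0, by ring⟩
        · exact ⟨0, 0, 1, by ring⟩
      · exact ⟨0, 0, 0, by ring⟩
      · rintro _ _ _ _ ⟨x, u, v, rfl⟩ ⟨x', u', v', rfl⟩
        exact ⟨x + x', u + u', v + v', by ring⟩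
    obtain ⟨x, u, v, rfl⟩ := this
    have e : x * m + u * (a * m + 1) + v * (b * m + t) = (u + v * t) + m * (x + u * a + v * b) := by ring
    rw [e, Nat.add_mul_mod_self_left, Nat.add_mul_div_left _ _ hm]
    have := ff_mono a b t ht hb' (Nat.mod_le (u + v * t) m)
    have := ff_le a b t u v ht hb
    have := Nat.zero_le ((u + v * t) / m)
    linarith
  · intro h
    obtain ⟨k, hk⟩ := Nat.exists_eq_add_of_le h
    have e : n = k • m + (n % m % t) • (a * m + 1) + (n % m / t) • (b * m + t) := by
      have h1 := Nat.div_add_mod n m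
      have h2 := Nat.div_add_mod (n % m) t
      simp only [smul_eq_mul]
      unfold ff at hk
      rw [hk] at h1
      generalize n % m % t = R at *
      generalize n % m / t = A at *
      rw [← h1, ← h2]; ring
    rw [e]
    unfold gen
    refine add_mem (add_mem ?_ ?_) ?_ <;> refine nsmul_mem (AddSubmonoid.subset_closure ?_) _ <;> simp

lemma genus_eq (m a b t : ℕ) (hm : 0 < m) (ht : 2 ≤ t) (hb : b ≤ t * a) (hb' : (t - 1) * a ≤ b) :
    nsGenus (gen {m, a * m + 1, b * m + t}) = ∑ i ∈ Finset.range m, ff a b t i := by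
  unfold nsGenus
  have : {x | x ∉ gen {m, a * m + 1, b * m + t}} =
      (((Finset.range m).sigma (fun i => Finset.range (ff a b t i))).image
        (fun p => p.1 + m * p.2) : Finset ℕ) := by
    ext n
    simp only [Set.mem_setOf_eq, mem_iff m a b t n hm ht hb hb', not_le, Finset.coe_image,
      Set.mem_image, Finset.mem_coe, Finset.mem_sigma, Finset.mem_range]
    constructor
    · intro h
      exact ⟨⟨n % m, n / m⟩, ⟨Nat.mod_lt _ hm, h⟩, Nat.mod_add_div n m⟩
    · rintro ⟨⟨i, k⟩, ⟨h1, h2⟩, rfl⟩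
      dsimp only at *
      rw [Nat.add_mul_mod_self_left, Nat.add_mul_div_left _ _ hm, Nat.mod_eq_of_lt h1,
        Nat.div_eq_of_lt h1]
      omega
  rw [this, Set.ncard_coe_finset, Finset.card_image_of_injOn, Finset.card_sigma]
  · simp
  · rintro ⟨i, k⟩ h ⟨i', k'⟩ h' e
    simp only [Finset.coe_sigma, Set.mem_sigma_iff, Finset.mem_coe, Finset.mem_range] at h h' e
    have e1 := congrArg (· % m) e
    have e2 := congrArg (· / m) e
    simp only [Nat.add_mul_mod_self_left, Nat.add_mul_div_left _ _ hm, Nat.mod_eq_of_lt h.1,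
        Nat.div_eq_of_lt h.1, Nat.mod_eq_of_lt h'.1, Nat.div_eq_of_lt h'.1, zero_add] at e1 e2
    subst e1 e2; rfl

lemma sum_ff_aux (a b t q : ℕ) (ht : 2 ≤ t) (C : ℚ)
    (h : ((∑ i ∈ Finset.range (q * t), ff a b t i : ℕ) : ℚ) = C) (r : ℕ) (hr : r ≤ t) :
    ((∑ i ∈ Finset.range (q * t + r), ff a b t i : ℕ) : ℚ) =
      C + (r : ℚ) * (r - 1) / 2 * a + r * q * b := by
  induction r with
  | zero => simp [h]
  | succ r ih =>
    rw [← add_assoc, Finset.sum_range_succ, Nat.cast_add, ih (by omega)]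
    have : ff a b t (q * t + r) = r * a + q * b := by
      unfold ff
      rw [add_comm (q * t) r, Nat.add_mul_mod_self_right, Nat.add_mul_div_right _ _ (by omega),
        Nat.mod_eq_of_lt (by omega), Nat.div_eq_of_lt (by omega), zero_add]
    rw [this]; push_cast; ring

lemma sum_ff (a b t q : ℕ) (ht : 2 ≤ t) :
    ((∑ i ∈ Finset.range (q * t), ff a b t i : ℕ) : ℚ) =
      (q : ℚ) * t * (t - 1) / 2 * a + (q : ℚ) * t * (q - 1) / 2 * b := by
  induction q with
  | zero => simp
  | succ q ih =>
    rw [add_mul, one_mul, sum_ff_aux a b t q ht _ ih t le_rfl]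
    push_cast; ring

theorem stmt11 (m a b t q r : ℕ) (hm : 3 ≤ m) (ha : 1 ≤ a) (ht2 : 2 ≤ t) (htm : t ≤ m - 1)
    (h1 : (t - 1) * (a * m + 1) < b * m + t) (h2 : b * m + t < t * (a * m + 1))
    (hq : q = (m - 1) / t) (hr : r = (m - 1) % t) :
    (nsGenus (gen {m, a * m + 1, b * m + t}) : ℚ) =
        ((q : ℚ) * t * ((t : ℚ) - 1) + (r : ℚ) * ((r : ℚ) + 1)) / (2 * (m : ℚ))
          * ((a : ℚ) * m + 1)
      + ((q : ℚ) * t * ((q : ℚ) - 1) + 2 * (q : ℚ) * ((r : ℚ) + 1)) / (2 * (m : ℚ))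
          * ((b : ℚ) * m + t)
      - ((m : ℚ) - 1) / 2
    ∧ (nsGenus (gen {m, a * m + 1, b * m + t}) : ℚ) =
        ((q : ℚ) * t * ((t : ℚ) - 1) + (r : ℚ) * ((r : ℚ) + 1)) * (a : ℚ) / 2
      + ((q : ℚ) * t * ((q : ℚ) - 1) + 2 * (q : ℚ) * ((r : ℚ) + 1)) * (b : ℚ) / 2 := by
  have hb : b ≤ t * a := by
    by_contra! h
    have := Nat.mul_le_mul_right m h.le
    nlinarith
  have hb' : (t - 1) * a ≤ b := by
    by_contra! h
    have := Nat.mul_le_mul_right m (Nat.succ_le_of_lt h)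
    obtain ⟨s, rfl⟩ : ∃ s, t = s + 1 := ⟨t - 1, by omega⟩
    simp only [Nat.add_sub_cancel] at *
    nlinarith
  have hmq : m = q * t + (r + 1) := by
    have := Nat.div_add_mod (m - 1) t
    rw [← hq, ← hr, mul_comm] at this
    omega
  have hrt : r + 1 ≤ t := by
    rw [hr]; exact Nat.mod_lt _ (by omega)
  have hmQ : (m : ℚ) = q * t + (r + 1) := by exact_mod_cast hmq
  have hm0 : (m : ℚ) ≠ 0 := by
    have : m ≠ 0 := by omega
    exact_mod_cast this
  have key : (nsGenus (gen {m, a * m + 1, b * m + t}) : ℚ) =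
        ((q : ℚ) * t * ((t : ℚ) - 1) + (r : ℚ) * ((r : ℚ) + 1)) * (a : ℚ) / 2
      + ((q : ℚ) * t * ((q : ℚ) - 1) + 2 * (q : ℚ) * ((r : ℚ) + 1)) * (b : ℚ) / 2 := by
    have h := sum_ff_aux a b t q ht2 _ (sum_ff a b t q ht2) (r + 1) hrt
    rw [← hmq] at h
    rw [genus_eq m a b t (by omega) ht2 hb hb', h]
    push_cast; ring
  refine ⟨?_, key⟩
  rw [key]
  field_simp
  rw [hmQ]
  ring
end

section
/- Let S = ⟨m, am+1, bm+t⟩ be a MANS-semigroup with embedding dimension 3, where m ≥ 3, a ≥ 1, t ∈ {2, …, m−1}, and (t−1)(am+1) < bm+t < t(am+1). Set q = ⌊(m−1)/t⌋ and r = (m−1) mod t. If t divides m, then PF(S) = {q(bm+t) + r(am+1) − m}; if t does not divide m, then PF(S) = {(q−1)(bm+t) + (t−1)(am+1) − m, q(bm+t) + r(am+1) − m}. -/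
def KK (t a b i : ℕ) : ℕ := (i / t) * b + (i % t) * a

theorem KK_add (t a b i : ℕ) (ht : 0 < t) : KK t a b (i + t) = KK t a b i + b := by
  unfold KK
  rw [Nat.add_div_right _ ht, Nat.add_mod_right]
  ring

theorem KK_small (t a b i : ℕ) (h : i < t) : KK t a b i = i * a := by
  unfold KK
  rw [Nat.div_eq_of_lt h, Nat.mod_eq_of_lt h]; ring

theorem KK_mul (t a b z i : ℕ) (ht : 0 < t) : KK t a b (z * t + i) = z * b + KK t a b i := by
  induction z with
  | zero => simp
  | succ z ih =>
    rw [show (z + 1) * t + i = (z * t + i) + t by ring, KK_add _ _ _ _ ht, ih]; ring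

theorem KK_succ (t a b i : ℕ) (ht : 0 < t) :
    (i % t + 1 < t ∧ KK t a b (i + 1) = KK t a b i + a) ∨
    (i % t + 1 = t ∧ KK t a b (i + 1) + (t - 1) * a = KK t a b i + b) := by
  have hi : i = (i / t) * t + i % t := (Nat.div_add_mod' i t).symm
  have hlt := Nat.mod_lt i ht
  generalize i / t = z at hi
  generalize i % t = s at hi hlt
  subst hi
  rcases Nat.lt_or_ge (s + 1) t with h | h
  · left
    refine ⟨h, ?_⟩
    rw [add_assoc, KK_mul _ _ _ _ _ ht, KK_mul _ _ _ _ _ ht, KK_small _ _ _ _ h,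
      KK_small _ _ _ _ hlt]; ring
  · right
    have h' : s + 1 = t := by omega
    refine ⟨h', ?_⟩
    have : t - 1 = s := by omega
    rw [add_assoc, KK_mul _ _ _ _ _ ht, KK_mul _ _ _ _ _ ht, KK_small _ _ _ _ hlt, this, h']
    have := KK_add t a b 0 ht
    rw [zero_add, KK_small _ _ _ _ ht] at this
    rw [this]; ring

theorem KK_mono (t a b : ℕ) (ht : 0 < t) (hb : (t - 1) * a ≤ b) : Monotone (KK t a b) := by
  apply monotone_nat_of_le_succ
  intro i
  rcases KK_succ t a b i ht with h | h <;> omega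

theorem KK_le (t a b i : ℕ) (ht : 0 < t) (hb : b ≤ t * a) : KK t a b i ≤ i * a := by
  have hi : i = (i / t) * t + i % t := (Nat.div_add_mod' i t).symm
  unfold KK
  calc (i / t) * b + (i % t) * a ≤ (i / t) * (t * a) + (i % t) * a := by gcongr
    _ = ((i / t) * t + i % t) * a := by ring
    _ = i * a := by rw [← hi]

theorem gen_mem (m a b t n : ℕ) :
    n ∈ gen {m, a * m + 1, b * m + t} ↔
      ∃ x y z : ℕ, n = x * m + y * (a * m + 1) + z * (b * m + t) := by
  unfold gen
  rw [SetLike.mem_coe]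
  constructor
  · intro h
    induction h using AddSubmonoid.closure_induction with
    | mem x hx =>
      rcases hx with rfl | rfl | rfl
      · exact ⟨1, 0, 0, by ring⟩
      · exact ⟨0, 1, 0, by ring⟩
      · exact ⟨0, 0, 1, by ring⟩
    | zero => exact ⟨0, 0, 0, by ring⟩
    | add x y _ _ h1 h2 =>
      obtain ⟨x1, y1, z1, rfl⟩ := h1
      obtain ⟨x2, y2, z2, rfl⟩ := h2
      exact ⟨x1 + x2, y1 + y2, z1 + z2, by ring⟩
  · rintro ⟨x, y, z, rfl⟩
    have key : ∀ (c g : ℕ), g ∈ ({m, a * m + 1, b * m + t} : Set ℕ) →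
        c * g ∈ AddSubmonoid.closure ({m, a * m + 1, b * m + t} : Set ℕ) := by
      intro c g hg
      rw [← smul_eq_mul]
      exact AddSubmonoid.nsmul_mem _ (AddSubmonoid.subset_closure hg) c
    exact add_mem (add_mem (key _ _ (by simp)) (key _ _ (by simp))) (key _ _ (by simp))

theorem gen_mem_int (m a b t i : ℕ) (k : ℤ) (ht : 0 < t) (hi : i < m)
    (hb1 : (t - 1) * a ≤ b) (hb2 : b ≤ t * a) :
    (k * m + i : ℤ) ∈ ((Nat.cast : ℕ → ℤ) '' gen {m, a * m + 1, b * m + t}) ↔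
      (KK t a b i : ℤ) ≤ k := by
  constructor
  · rintro ⟨n, hn, hnk⟩
    obtain ⟨x, y, z, rfl⟩ := (gen_mem _ _ _ _ _).1 hn
    set j := z * t + y with hj
    have hK : KK t a b j ≤ z * b + y * a := by
      rw [hj, KK_mul _ _ _ _ _ ht]
      have := KK_le t a b y ht hb2
      omega
    have hdm := Nat.div_add_mod' j m
    have e : ((x + y * a + z * b + j / m : ℕ) : ℤ) * m + ((j % m : ℕ) : ℤ) = k * m + i := by
      rw [← hnk]
      have : (x + y * a + z * b + j / m) * m + j % m
          = x * m + y * (a * m + 1) + z * (b * m + t) := by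
        calc _ = (x + y * a + z * b) * m + (j / m * m + j % m) := by ring
          _ = _ := by rw [hdm, hj]; ring
      exact_mod_cast this
    have hjm : j % m < m := Nat.mod_lt _ (by omega)
    have hm0 : (0 : ℤ) < m := by omega
    have e1 := congrArg (· / (m : ℤ)) e
    rw [add_comm, Int.add_mul_ediv_right _ _ hm0.ne', add_comm (k * _),
      Int.add_mul_ediv_right _ _ hm0.ne', Int.ediv_eq_zero_of_lt (by omega) (by omega),
      Int.ediv_eq_zero_of_lt (by omega) (by omega)] at e1
    rw [zero_add, zero_add] at e1
    have e3 : j % m = i := by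
      rw [e1] at e; omega
    have : KK t a b i ≤ KK t a b j := KK_mono t a b ht hb1 (e3 ▸ Nat.mod_le _ _)
    rw [← e1]
    have : KK t a b i ≤ x + y * a + z * b + j / m := by
      have := Nat.zero_le (j / m); omega
    exact_mod_cast this
  · intro h
    obtain ⟨d, rfl⟩ : ∃ d : ℕ, k = KK t a b i + d := ⟨(k - KK t a b i).toNat, by omega⟩
    refine ⟨d * m + (i % t) * (a * m + 1) + (i / t) * (b * m + t),
      (gen_mem _ _ _ _ _).2 ⟨_, _, _, rfl⟩, ?_⟩
    have hi : (i / t) * t + i % t = i := (Nat.div_add_mod' i t)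
    have : d * m + (i % t) * (a * m + 1) + (i / t) * (b * m + t) = (KK t a b i + d) * m + i := by
      unfold KK
      calc _ = (i / t * b + i % t * a + d) * m + (i / t * t + i % t) := by ring
        _ = _ := by rw [hi]
    exact_mod_cast this

theorem pf_iff (m a b t i : ℕ) (k : ℤ) (ht : 2 ≤ t) (hi : i < m) (ha : 1 ≤ a) (htm : t < m)
    (hb1 : (t - 1) * a ≤ b) (hb2 : b < t * a) :
    (k * m + i : ℤ) ∈ nsPF (gen {m, a * m + 1, b * m + t}) ↔
      k = KK t a b i - 1 ∧ m ≤ i + t ∧ (i + 1 = m ∨ i % t + 1 = t) := by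
  have ht0 : 0 < t := by omega
  have M := fun (k : ℤ) (i : ℕ) (hi : i < m) => gen_mem_int m a b t i k ht0 hi hb1 hb2.le
  have hmono := KK_mono t a b ht0 hb1
  have hK0 : KK t a b 0 = 0 := by simp [KK_small _ _ _ _ ht0]
  have hta : t * a = (t - 1) * a + a := by
    obtain ⟨s, rfl⟩ : ∃ s, t = s + 1 := ⟨t - 1, by omega⟩
    simp; ring
  have E1 : (k * m + i : ℤ) + (m : ℕ) ∈
      ((Nat.cast : ℕ → ℤ) '' gen {m, a * m + 1, b * m + t}) ↔ (KK t a b i : ℤ) ≤ k + 1 := by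
    rw [← M _ _ hi]; ring_nf
  have E2 : (k * m + i : ℤ) + (a * m + 1 : ℕ) ∈
      ((Nat.cast : ℕ → ℤ) '' gen {m, a * m + 1, b * m + t}) ↔
      (if i + 1 = m then 0 ≤ k + a + 1 else (KK t a b (i + 1) : ℤ) ≤ k + a) := by
    split_ifs with h
    · have := M (k + a + 1) 0 (by omega)
      rw [hK0] at this
      rw [← Nat.cast_zero, ← this]
      have : (m : ℤ) = i + 1 := by omega
      have e : (k * m + i : ℤ) + (a * m + 1 : ℕ) = (k + a + 1) * m + (0 : ℕ) := by
        push_cast; rw [this]; ring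
      rw [e]
    · rw [← M _ _ (by omega)]
      have e : (k * m + i : ℤ) + (a * m + 1 : ℕ) = (k + a) * m + (i + 1 : ℕ) := by
        push_cast; ring
      rw [e]
  have E3 : (k * m + i : ℤ) + (b * m + t : ℕ) ∈
      ((Nat.cast : ℕ → ℤ) '' gen {m, a * m + 1, b * m + t}) ↔
      (if m ≤ i + t then (KK t a b (i + t - m) : ℤ) ≤ k + b + 1
        else (KK t a b (i + t) : ℤ) ≤ k + b) := by
    split_ifs with h
    · rw [← M _ _ (by omega)]
      have e : (k * m + i : ℤ) + (b * m + t : ℕ) = (k + b + 1) * m + (i + t - m : ℕ) := by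
        push_cast [h]; ring
      rw [e]
    · rw [← M _ _ (by omega)]
      have e : (k * m + i : ℤ) + (b * m + t : ℕ) = (k + b) * m + (i + t : ℕ) := by
        push_cast; ring
      rw [e]
  have hG : (k * m + i : ℤ) ∈ nsPF (gen {m, a * m + 1, b * m + t}) ↔
      ¬ (KK t a b i : ℤ) ≤ k ∧ (KK t a b i : ℤ) ≤ k + 1 ∧
      (if i + 1 = m then 0 ≤ k + a + 1 else (KK t a b (i + 1) : ℤ) ≤ k + a) ∧
      (if m ≤ i + t then (KK t a b (i + t - m) : ℤ) ≤ k + b + 1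
        else (KK t a b (i + t) : ℤ) ≤ k + b) := by
    rw [← E1, ← E2, ← E3, ← M _ _ hi]
    unfold nsPF
    rw [Set.mem_setOf_eq]
    refine and_congr_right fun _ => ⟨fun h => ⟨h _ ?_ (by omega), h _ ?_ (by omega),
      h _ ?_ (by omega)⟩, ?_⟩
    · exact AddSubmonoid.subset_closure (by simp)
    · exact AddSubmonoid.subset_closure (by simp)
    · exact AddSubmonoid.subset_closure (by simp)
    · rintro ⟨g1, g2, g3⟩ s hs
      unfold gen at hs
      rw [SetLike.mem_coe] at hs
      induction hs using AddSubmonoid.closure_induction with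
      | mem x hx => rcases hx with rfl | rfl | rfl <;> intro _ <;> assumption
      | zero => simp
      | add x y hx hy h1 h2 =>
        intro h0
        by_cases hx0 : x = 0
        · subst hx0
          rw [zero_add] at h0 ⊢
          exact h2 h0
        · obtain ⟨n, hn, hn'⟩ := h1 hx0
          refine ⟨n + y, AddSubmonoid.add_mem _ hn hy, ?_⟩
          push_cast
          rw [hn']; ring
  rw [hG]
  have hadd := KK_add t a b i ht0
  have hsucc := KK_succ t a b i ht0
  have hle : m ≤ i + t → KK t a b (i + t - m) ≤ KK t a b i := fun _ => hmono (by omega)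
  split_ifs <;> omega

theorem stmt14 (m a b t q r : ℕ) (hm : 3 ≤ m) (ha : 1 ≤ a) (ht2 : 2 ≤ t) (htm : t ≤ m - 1)
    (h1 : (t - 1) * (a * m + 1) < b * m + t) (h2 : b * m + t < t * (a * m + 1))
    (hq : q = (m - 1) / t) (hr : r = (m - 1) % t) :
    (t ∣ m → nsPF (gen {m, a * m + 1, b * m + t}) =
        {(q : ℤ) * (b * m + t) + (r : ℤ) * (a * m + 1) - m}) ∧
    (¬ t ∣ m → nsPF (gen {m, a * m + 1, b * m + t}) =
        {((q : ℤ) - 1) * (b * m + t) + ((t : ℤ) - 1) * (a * m + 1) - m,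
         (q : ℤ) * (b * m + t) + (r : ℤ) * (a * m + 1) - m}) := by
  have ht0 : 0 < t := by omega
  have hb1 : (t - 1) * a ≤ b := by
    by_contra hc
    obtain ⟨s, rfl⟩ : ∃ s, t = s + 1 := ⟨t - 1, by omega⟩
    simp only [Nat.add_sub_cancel] at *
    have : b + 1 ≤ s * a := by omega
    nlinarith [Nat.mul_le_mul_right m this]
  have hb2 : b < t * a := by
    by_contra hc
    push Not at hc
    nlinarith [Nat.mul_le_mul_right m hc]
  have P := fun (k : ℤ) (i : ℕ) (hi : i < m) =>
    pf_iff m a b t i k ht2 hi ha (by omega) hb1 hb2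
  have hqr : q * t + r = m - 1 := by rw [hq, hr]; exact Nat.div_add_mod' _ _
  have hrt : r < t := hr ▸ Nat.mod_lt _ ht0
  have hq1 : 1 ≤ q := by
    rw [hq]; exact (Nat.one_le_div_iff ht0).2 htm
  have hmz : (m : ℤ) = q * t + r + 1 := by
    have : m = q * t + r + 1 := by omega
    exact_mod_cast this
  have hKm : KK t a b (m - 1) = q * b + r * a := by
    rw [← hqr, KK_mul _ _ _ _ _ ht0, KK_small _ _ _ _ hrt]
  have R : ∀ x : ℤ, ∃ (k : ℤ) (i : ℕ), i < m ∧ x = k * m + i := by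
    intro x
    have hm0 : (0 : ℤ) < m := by omega
    refine ⟨x / m, (x % m).toNat, ?_, ?_⟩
    · have := Int.emod_lt_of_pos x hm0; omega
    · rw [Int.toNat_of_nonneg (Int.emod_nonneg _ hm0.ne')]
      exact (Int.ediv_mul_add_emod x m).symm
  have A : ((q : ℤ) * (b * m + t) + (r : ℤ) * (a * m + 1) - m)
      = ((KK t a b (m - 1) : ℤ) - 1) * m + (m - 1 : ℕ) := by
    rw [hKm, ← hqr]; push_cast; ring
  have A' : ((q : ℤ) * (b * m + t) + (r : ℤ) * (a * m + 1) - m) ∈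
      nsPF (gen {m, a * m + 1, b * m + t}) := by
    rw [A, P _ _ (by omega)]
    exact ⟨rfl, by omega, Or.inl (by omega)⟩
  -- other candidates
  have C : ∀ i, i < m → m ≤ i + t → i % t + 1 = t → i + 1 = q * t ∨ (r + 1 = t ∧ i + 1 = m) := by
    intro i hi hmi hit
    have hdm := Nat.div_add_mod' i t
    generalize i / t = z at hdm
    have e : i + 1 = (z + 1) * t := by rw [add_mul]; omega
    rcases Nat.lt_trichotomy (z + 1) q with h | h | h
    · exfalso
      have := Nat.mul_le_mul_right t (show z + 1 + 1 ≤ q from h)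
      rw [add_mul (z + 1)] at this
      omega
    · left; rw [e, h]
    · right
      have := Nat.mul_le_mul_right t (show q + 1 ≤ z + 1 from h)
      rw [add_mul] at this
      omega
  have D : t ∣ m ↔ r + 1 = t := by
    have hm' : m = q * t + (r + 1) := by omega
    rw [hm', Nat.dvd_add_right (Dvd.intro_left q rfl)]
    constructor
    · intro h
      have := Nat.le_of_dvd (by omega) h
      omega
    · intro h; rw [h]
  obtain ⟨p, rfl⟩ : ∃ p, q = p + 1 := ⟨q - 1, by omega⟩
  have hpt : (p + 1) * t = p * t + (t - 1) + 1 := by rw [add_mul]; omega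
  have hKp : KK t a b (p * t + (t - 1)) = p * b + (t - 1) * a := by
    rw [KK_mul _ _ _ _ _ ht0, KK_small _ _ _ _ (by omega)]
  have hmod : (p * t + (t - 1)) % t = t - 1 := by
    rw [Nat.mul_add_mod', Nat.mod_eq_of_lt (by omega)]
  have B : ((((p + 1 : ℕ) : ℤ) - 1) * (b * m + t) + ((t : ℤ) - 1) * (a * m + 1) - m)
      = ((KK t a b (p * t + (t - 1)) : ℤ) - 1) * m + (p * t + (t - 1) : ℕ) := by
    rw [hKp]; push_cast [show 1 ≤ t by omega]; ring
  constructor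
  · intro hd
    have hrt' := D.1 hd
    ext x
    rw [Set.mem_singleton_iff]
    refine ⟨fun hx => ?_, fun hx => hx ▸ A'⟩
    obtain ⟨k, i, hi, rfl⟩ := R x
    obtain ⟨rfl, h3, h4⟩ := (P _ _ hi).1 hx
    have : i = m - 1 := by
      rcases h4 with h4 | h4
      · omega
      · rcases C i hi h3 h4 with h5 | h5 <;> omega
    rw [A, this]
  · intro hd
    have hrt' : ¬ r + 1 = t := fun h => hd (D.2 h)
    ext x
    rw [Set.mem_insert_iff, Set.mem_singleton_iff]
    constructor
    · intro hx
      obtain ⟨k, i, hi, rfl⟩ := R x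
      obtain ⟨rfl, h3, h4⟩ := (P _ _ hi).1 hx
      rcases h4 with h4 | h4
      · right
        have : i = m - 1 := by omega
        rw [A, this]
      · left
        have : i = p * t + (t - 1) := by
          rcases C i hi h3 h4 with h5 | h5 <;> omega
        rw [B, this]
    · rintro (rfl | rfl)
      · rw [B, P _ _ (by omega)]
        exact ⟨rfl, by omega, Or.inr (by omega)⟩
      · exact A'
end

section
/- Let S = ⟨m, am+1, bm+t⟩ be a MANS-semigroup with embedding dimension 3, where m ≥ 3, a ≥ 1, t ∈ {2, …, m−1}, and (t−1)(am+1) < bm+t < t(am+1). Then S is pseudo-symmetric if and only if t = (m+1)/2 and t = (b+1)/a (i.e. 2t = m+1 and ta = b+1). -/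
namespace Pf15

def K (a b t i : ℕ) : ℕ := b * (i / t) + a * (i % t)

lemma K_eq (a b t q r : ℕ) (hr : r < t) : K a b t (q * t + r) = b * q + a * r := by
  have ht : 0 < t := by omega
  have e1 : (q * t + r) / t = q := by
    rw [mul_comm, Nat.mul_add_div ht, Nat.div_eq_of_lt hr, add_zero]
  have e2 : (q * t + r) % t = r := by
    rw [mul_comm, Nat.mul_add_mod, Nat.mod_eq_of_lt hr]
  rw [K, e1, e2]

lemma decomp (t i : ℕ) (ht : 0 < t) : ∃ q r, r < t ∧ i = q * t + r :=
  ⟨i / t, i % t, Nat.mod_lt _ ht, by rw [mul_comm]; exact (Nat.div_add_mod i t).symm⟩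

lemma K_mono (a b t : ℕ) (ht : 2 ≤ t) (hb : (t - 1) * a ≤ b) : Monotone (K a b t) := by
  apply monotone_nat_of_le_succ
  intro i
  obtain ⟨q, r, hr, rfl⟩ := decomp t i (by omega)
  by_cases h : r + 1 < t
  · rw [add_assoc, K_eq _ _ _ _ _ hr, K_eq _ _ _ _ _ h]; nlinarith
  · have : q * t + r + 1 = (q + 1) * t + 0 := by
      have : r + 1 = t := by omega
      rw [add_assoc, this]; ring
    rw [this, K_eq _ _ _ _ _ hr, K_eq _ _ _ _ _ (by omega)]
    have : r = t - 1 := by omega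
    subst this
    nlinarith

lemma K_sub (a b t : ℕ) (ht : 2 ≤ t) (hb : b ≤ t * a) (i j : ℕ) :
    K a b t (i + j) ≤ K a b t i + K a b t j := by
  obtain ⟨q, r, hr, rfl⟩ := decomp t i (by omega)
  obtain ⟨q', r', hr', rfl⟩ := decomp t j (by omega)
  rw [K_eq _ _ _ _ _ hr, K_eq _ _ _ _ _ hr']
  by_cases h : r + r' < t
  · rw [show q * t + r + (q' * t + r') = (q + q') * t + (r + r') by ring, K_eq _ _ _ _ _ h]
    nlinarith
  · obtain ⟨s, hs⟩ : ∃ s, r + r' = t + s := ⟨r + r' - t, by omega⟩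
    rw [show q * t + r + (q' * t + r') = (q + q' + 1) * t + s by
      calc _ = (q + q') * t + (r + r') := by ring
        _ = _ := by rw [hs]; ring, K_eq _ _ _ _ _ (by omega)]
    have : a * r + a * r' = a * t + a * s := by rw [← mul_add, hs, mul_add]
    nlinarith

lemma mem_iff (m a b t : ℕ) (hm : 3 ≤ m) (ht : 2 ≤ t) (htm : t < m)
    (hb1 : (t - 1) * a ≤ b) (hb2 : b ≤ t * a) (n : ℕ) :
    n ∈ gen {m, a * m + 1, b * m + t} ↔ K a b t (n % m) ≤ n / m := by
  constructor
  · intro h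
    induction h using AddSubmonoid.closure_induction with
    | mem x hx =>
      have h0 : K a b t 0 = 0 := by simp [K]
      have h1 : K a b t 1 = a := by
        have := K_eq a b t 0 1 (by omega); simpa using this
      have h2 : K a b t t = b := by
        have := K_eq a b t 1 0 (by omega); simpa using this
      rcases hx with rfl | rfl | rfl
      · simp [h0]
      · rw [mul_comm a m, Nat.mul_add_mod, Nat.mod_eq_of_lt (by omega),
          Nat.mul_add_div (by omega), h1]; exact Nat.le_add_right _ _
      · rw [mul_comm b m, Nat.mul_add_mod, Nat.mod_eq_of_lt htm,
          Nat.mul_add_div (by omega), h2]; exact Nat.le_add_right _ _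
    | zero => simp [K]
    | add x y _ _ hx hy =>
      have hs := K_sub a b t ht hb2 (x % m) (y % m)
      have hmo := K_mono a b t ht hb1 (Nat.mod_le (x % m + y % m) m)
      rw [Nat.add_mod]
      have : x / m + y / m ≤ (x + y) / m := Nat.add_div_le_add_div x y m
      omega
  · intro h
    have e : n = (n % m / t) • (b * m + t) + (n % m % t) • (a * m + 1)
        + (n / m - K a b t (n % m)) • m := by
      obtain ⟨d, hd⟩ := Nat.exists_eq_add_of_le h
      have e1 := Nat.div_add_mod n m
      have e2 := Nat.div_add_mod (n % m) t
      rw [hd] at e1 ⊢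
      rw [Nat.add_sub_cancel_left]
      simp only [smul_eq_mul]
      unfold K at e1
      generalize n % m / t = u at *
      generalize n % m % t = v at *
      nlinarith
    rw [e]
    have hs := @AddSubmonoid.subset_closure ℕ _ {m, a * m + 1, b * m + t}
    exact add_mem (add_mem (nsmul_mem (hs (by simp)) _) (nsmul_mem (hs (by simp)) _))
      (nsmul_mem (hs (by simp)) _)

lemma genus (m : ℕ) (hm : 0 < m) (f : ℕ → ℕ) :
    Set.ncard {n | ¬ f (n % m) ≤ n / m} = ∑ i ∈ Finset.range m, f i := by
  have : {n | ¬ f (n % m) ≤ n / m} =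
      (((Finset.range m).sigma (fun i => Finset.range (f i))).image
        (fun p => m * p.2 + p.1) : Finset ℕ) := by
    ext n
    simp only [Set.mem_setOf_eq, Finset.coe_image, Set.mem_image, Finset.mem_coe,
      Finset.mem_sigma, Finset.mem_range]
    constructor
    · intro h
      exact ⟨⟨n % m, n / m⟩, ⟨Nat.mod_lt _ hm, by simpa using h⟩, Nat.div_add_mod n m⟩
    · rintro ⟨⟨i, k⟩, ⟨h1, h2⟩, rfl⟩
      simp only at h1 h2 ⊢
      rw [Nat.mul_add_mod, Nat.mod_eq_of_lt h1, Nat.mul_add_div hm, Nat.div_eq_of_lt h1]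
      omega
  rw [this, Set.ncard_coe_finset, Finset.card_image_of_injOn, Finset.card_sigma]
  · simp
  · rintro ⟨i, k⟩ h ⟨i', k'⟩ h' e
    simp only [Finset.mem_coe, Finset.mem_sigma, Finset.mem_range] at h h' e
    have e1 := congrArg (· % m) e
    have e2 := congrArg (· / m) e
    simp only [Nat.mul_add_mod, Nat.mod_eq_of_lt h.1, Nat.mod_eq_of_lt h'.1] at e1
    simp only [Nat.mul_add_div hm, Nat.div_eq_of_lt h.1, Nat.div_eq_of_lt h'.1] at e2
    simp at e2
    subst e1 e2
    rfl

lemma frob (m : ℕ) (hm : 0 < m) (f : ℕ → ℕ) (hf : Monotone f) (h1 : 1 ≤ f (m - 1)) :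
    sSup {n | ¬ f (n % m) ≤ n / m} = f (m - 1) * m - 1 := by
  apply IsGreatest.csSup_eq
  obtain ⟨k, hk⟩ : ∃ k, f (m - 1) = k + 1 := ⟨f (m - 1) - 1, by omega⟩
  constructor
  · have e : f (m - 1) * m - 1 = m * k + (m - 1) := by
      rw [hk, add_mul, mul_comm k m]; omega
    have hl : m - 1 < m := by omega
    rw [Set.mem_setOf_eq, e, Nat.mul_add_mod, Nat.mod_eq_of_lt hl, Nat.mul_add_div hm,
      Nat.div_eq_of_lt hl]
    omega
  · intro n hn
    simp only [Set.mem_setOf_eq, not_le] at hn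
    have h2 : n % m ≤ m - 1 := by have := Nat.mod_lt n hm; omega
    have h3 := hf h2
    have h4 : n < f (m - 1) * m := (Nat.div_lt_iff_lt_mul hm).1 (by omega)
    omega

lemma sumK (a b t : ℕ) (n q r : ℕ) (hr : r < t) (hn : n = q * t + r) :
    2 * (∑ i ∈ Finset.range (n + 1), (K a b t i : ℤ)) =
      (n + 1) * K a b t n + ((t : ℤ) * a - b) * q * (t - 1 - r) := by
  induction n generalizing q r with
  | zero =>
    have hr0 : r = 0 := by omega
    have hq : q = 0 := by
      rcases Nat.eq_zero_or_pos q with h | h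
      · exact h
      · have := Nat.mul_pos h (show 0 < t by omega); omega
    subst hq hr0
    simp [K]
  | succ n ih =>
    rw [Finset.sum_range_succ, mul_add]
    rcases Nat.eq_zero_or_pos r with h | h
    · obtain ⟨p, rfl⟩ : ∃ p, q = p + 1 := ⟨q - 1, by
        have : q ≠ 0 := by rintro rfl; omega
        omega⟩
      subst h
      have e : n = p * t + (t - 1) := by
        have : (p + 1) * t = p * t + t := by ring
        omega
      rw [ih p (t - 1) (by omega) e, hn, K_eq _ _ _ _ _ hr]
      have hn' : (n : ℤ) = p * t + (t - 1) := by
        have : n + 1 = p * t + t := by rw [e]; omega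
        have : (n : ℤ) + 1 = p * t + t := by exact_mod_cast this
        linarith
      have hK : (K a b t n : ℤ) = b * p + a * (t - 1) := by
        rw [e, K_eq _ _ _ _ _ (by omega)]
        push_cast [Nat.cast_sub (show 1 ≤ t by omega)]; ring
      rw [hK, hn']
      push_cast [Nat.cast_sub (show 1 ≤ t by omega)]
      ring
    · obtain ⟨s, rfl⟩ : ∃ s, r = s + 1 := ⟨r - 1, by omega⟩
      have e : n = q * t + s := by omega
      rw [ih q s (by omega) e, hn, K_eq _ _ _ _ _ hr, e, K_eq _ _ _ _ _ (by omega)]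
      push_cast
      ring

end Pf15

open Pf15 in
theorem stmt15 (m a b t : ℕ) (hm : 3 ≤ m) (ha : 1 ≤ a) (ht2 : 2 ≤ t) (htm : t ≤ m - 1)
    (h1 : (t - 1) * (a * m + 1) < b * m + t) (h2 : b * m + t < t * (a * m + 1)) :
    IsPseudoSymmetric (gen {m, a * m + 1, b * m + t}) ↔
      2 * t = m + 1 ∧ t * a = b + 1 := by
  have hb2 : b < t * a := by
    have : b * m < (t * a) * m := by nlinarith
    exact lt_of_mul_lt_mul_right this (Nat.zero_le m)
  have hb1 : (t - 1) * a ≤ b := by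
    by_contra hc
    have hc : b + 1 ≤ (t - 1) * a := by omega
    have := Nat.mul_le_mul_right m hc
    obtain ⟨s, rfl⟩ : ∃ s, t = s + 1 := ⟨t - 1, by omega⟩
    simp only [Nat.add_sub_cancel] at *
    nlinarith
  have hset : {x | x ∉ gen {m, a * m + 1, b * m + t}} = {n | ¬ K a b t (n % m) ≤ n / m} := by
    ext n
    simp only [Set.mem_setOf_eq, mem_iff m a b t hm ht2 (by omega) hb1 hb2.le]
  have hmono := K_mono a b t ht2 hb1
  have hK1 : K a b t 1 = a := by
    have := K_eq a b t 0 1 (by omega); simpa using this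
  have hKm : 1 ≤ K a b t (m - 1) := by
    have := hmono (show 1 ≤ m - 1 by omega); omega
  unfold IsPseudoSymmetric nsFrob nsGenus
  rw [hset, genus m (by omega), frob m (by omega) _ hmono hKm]
  obtain ⟨q, r, hr, hqr⟩ := decomp t (m - 1) (by omega)
  have hs := sumK a b t (m - 1) q r hr hqr
  rw [show m - 1 + 1 = m by omega] at hs
  have hpos : 1 ≤ K a b t (m - 1) * m := Nat.mul_pos hKm (by omega)
  push_cast [Nat.cast_sub hpos, Nat.cast_sub (show 1 ≤ m by omega)] at hs ⊢
  rw [hs]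
  obtain ⟨c, hc⟩ := Nat.exists_eq_add_of_lt hb2
  obtain ⟨d, hd⟩ := Nat.exists_eq_add_of_lt hr
  have hcz : (t : ℤ) * a - b = ((c + 1 : ℕ) : ℤ) := by
    have : (t : ℤ) * a = b + c + 1 := by exact_mod_cast hc
    push_cast; linarith
  have hdz : (t : ℤ) - 1 - r = (d : ℤ) := by
    have : (t : ℤ) = r + d + 1 := by exact_mod_cast hd
    linarith
  rw [hcz, hdz]
  have key : ((c + 1) * q * d = 1) ↔ (2 * t = m + 1 ∧ t * a = b + 1) := by
    constructor
    · intro h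
      have hd1 : d = 1 := Nat.eq_one_of_mul_eq_one_left h
      have h' := Nat.eq_one_of_mul_eq_one_right h
      have hq1 : q = 1 := Nat.eq_one_of_mul_eq_one_left h'
      have hc1 := Nat.eq_one_of_mul_eq_one_right h'
      subst hd1 hq1
      omega
    · rintro ⟨e1, e2⟩
      have hc0 : c = 0 := by omega
      have hq1 : q = 1 := by
        rcases Nat.lt_trichotomy q 1 with h | h | h
        · have : q = 0 := by omega
          subst this; omega
        · exact h
        · have := Nat.mul_le_mul_right t (show 2 ≤ q from h); omega
      subst hq1 hc0
      have : d = 1 := by omega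
      subst this; rfl
  rw [← key]
  zify
  push_cast
  constructor <;> intro h <;> linarith
end

section
/- Let S be a MANS-semigroup with msg(S) = {n₁ < n₂ < ⋯ < n_e}, where 2 ≤ e ≤ n₁ − 1, and write Ap(S, n₁) = {w(0), w(1), …, w(n₁−1)}. Suppose n_{e+1} ∈ ℕ satisfies: n_e < n_{e+1}, n_e mod n₁ < n_{e+1} mod n₁, and w((n_{e+1} mod n₁) − 1) < n_{e+1} < w(n_{e+1} mod n₁). Then S' = ⟨n₁, …, n_e, n_{e+1}⟩ is a MANS-semigroup with e(S') = e(S) + 1. -/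
theorem aux_ne (T : Set ℕ) (hT : IsNumSgp T) (m i : ℕ) (hm : 0 < m) :
    ∃ s, s ∈ T ∧ s % m = i % m := by
  obtain ⟨B, hB⟩ := hT.2.2.bddAbove
  refine ⟨i + m * (B + 1), ?_, by simp⟩
  by_contra h
  have h1 : i + m * (B + 1) ≤ B := hB h
  nlinarith

theorem aux_w (T : Set ℕ) (hT : IsNumSgp T) (m i : ℕ) (hm : 0 < m) :
    aperyW T m i ∈ T ∧ aperyW T m i % m = i % m :=
  Nat.sInf_mem (s := {s | s ∈ T ∧ s % m = i % m}) (aux_ne T hT m i hm)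

theorem aux_le (T : Set ℕ) (m i s : ℕ) (hs : s ∈ T) (h : s % m = i % m) :
    aperyW T m i ≤ s := Nat.sInf_le (s := {s | s ∈ T ∧ s % m = i % m}) ⟨hs, h⟩

theorem aux_mul (T : Set ℕ) (hT : IsNumSgp T) (m : ℕ) (hm : m ∈ T) (s k : ℕ) (hs : s ∈ T) :
    s + m * k ∈ T := by
  induction k with
  | zero => simpa
  | succ k ih => rw [Nat.mul_succ, ← add_assoc]; exact hT.2.1 _ ih _ hm

theorem aux_msg (T : Set ℕ) (hT : IsNumSgp T) (m : ℕ) (hm : m ∈ T) (hm0 : 0 < m) (x s : ℕ)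
    (hx : x ∈ msg T) (hmx : x ≠ m) (hs : s ∈ T) (h : s % m = x % m) : x ≤ s := by
  by_contra hlt
  push Not at hlt
  obtain ⟨k, hk⟩ : m ∣ x - s := (Nat.modEq_iff_dvd' hlt.le).1 h
  obtain _ | k := k
  · simp at hk; omega
  · rw [Nat.mul_succ] at hk
    exact hx.2.2 m hm hm0.ne' _ (aux_mul T hT m hm s k hs) (by omega) (by omega)

theorem aux_mono (T : Set ℕ) (m : ℕ) 
    (h : ∀ i : ℕ, 0 < i → i + 1 < m → aperyW T m i < aperyW T m (i + 1)) (i : ℕ) (hi : 0 < i)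
    (j : ℕ) (hij : i < j) (hj : j < m) : aperyW T m i < aperyW T m j := by
  induction j, hij using Nat.le_induction with
  | base => exact h i hi hj
  | succ j hij ih => exact (ih (by omega)).trans (h j (by omega) hj)

theorem aux_sub (T A : Set ℕ) (h : msg T ⊆ A) (x : ℕ) (hx : x ∈ T) : x ∈ gen A := by
  induction x using Nat.strong_induction_on with
  | _ x ih =>
    by_cases h0 : x = 0
    · subst h0; exact (AddSubmonoid.closure A).zero_mem
    by_cases hg : x ∈ msg T
    · exact AddSubmonoid.subset_closure (h hg)
    · simp only [msg, Set.mem_ofPred_eq, not_and, not_forall, not_not] at hg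
      obtain ⟨a, ha, ha0, b, hb, hb0, rfl⟩ := hg hx h0
      exact (AddSubmonoid.closure A).add_mem (ih a (by omega) ha) (ih b (by omega) hb)

theorem aux_dec (A : Set ℕ) (x : ℕ) (hx : x ∈ gen A) (h0 : x ≠ 0) :
    ∃ g ∈ A, g ≠ 0 ∧ ∃ y ∈ gen A, x = g + y := by
  revert h0
  refine AddSubmonoid.closure_induction (motive := fun x _ => x ≠ 0 → 
    ∃ g ∈ A, g ≠ 0 ∧ ∃ y ∈ gen A, x = g + y) ?_ ?_ ?_ hx
  · intro x hx h0
    exact ⟨x, hx, h0, 0, (AddSubmonoid.closure A).zero_mem, rfl⟩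
  · simp
  · intro x y hx hy ihx ihy h0
    by_cases hx0 : x = 0
    · subst hx0
      simpa using ihy (by omega)
    · obtain ⟨g, hg, hg0, z, hz, rfl⟩ := ihx hx0
      exact ⟨g, hg, hg0, z + y, (AddSubmonoid.closure A).add_mem hz hy, by ring⟩

theorem aux_low (T A : Set ℕ) (hT : IsNumSgp T) (N : ℕ) (hA : A ⊆ T) (x : ℕ)
    (hx : x ∈ gen (insert N A)) : x ∈ T ∨ N ≤ x := by
  refine AddSubmonoid.closure_induction (motive := fun x _ => x ∈ T ∨ N ≤ x) ?_ ?_ ?_ hx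
  · rintro x (rfl | h)
    · right; rfl
    · left; exact hA h
  · left; exact hT.1
  · rintro x y - - (h1 | h1) (h2 | h2)
    · left; exact hT.2.1 _ h1 _ h2
    all_goals right; omega

theorem aux_main (S : Set ℕ) (m M N : ℕ) (hM : IsNumSgp S) (hm0 : 0 < m)
    (hmin : ∀ x ∈ S, x ≠ 0 → m ≤ x) (hmS : m ∈ S) (hMg : M ∈ msg S) (hmM : m < M)
    (hmax : ∀ x ∈ msg S, x ≤ M)
    (hW : ∀ i : ℕ, 0 < i → i + 1 < m → aperyW S m i < aperyW S m (i + 1))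
    (hN1 : M < N) (hN2 : M % m < N % m)
    (hN3 : aperyW S m (N % m - 1) < N)
    (hN4 : N < aperyW S m (N % m)) :
    IsMANS (gen (insert N (msg S))) ∧
      msg (gen (insert N (msg S))) = insert N (msg S) := by
  have hlow := aux_low S (msg S) hM N (fun x hx => hx.1)
  have hsub := aux_sub S (insert N (msg S)) (Set.subset_insert _ _)
  have hdec := aux_dec (insert N (msg S))
  have hins : insert N (msg S) ⊆ gen (insert N (msg S)) := AddSubmonoid.subset_closure
  have hadd : ∀ a ∈ gen (insert N (msg S)), ∀ b ∈ gen (insert N (msg S)),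
      a + b ∈ gen (insert N (msg S)) :=
    fun a ha b hb => (AddSubmonoid.closure _).add_mem ha hb
  have hMm : M % m ≠ 0 := by
    intro h
    have := aux_msg S hM m hmS hm0 M 0 hMg (by omega) hM.1 (by simp [h])
    omega
  have hrm : N % m < m := Nat.mod_lt _ hm0
  have hres : ∀ g ∈ insert N (msg S), g % m ≤ N % m := by
    rintro g (rfl | hg)
    · rfl
    · by_contra! hlt
      have h1 := aux_mono S m hW (M % m) (by omega) (g % m) (by omega) (Nat.mod_lt _ hm0)
      have h2 := aux_w S hM m (M % m) hm0
      have h3 := aux_msg S hM m hmS hm0 M _ hMg (by omega) h2.1 (by simpa using h2.2)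
      have h4 := aux_le S m (g % m) g hg.1 (by simp)
      have h5 := hmax g hg
      omega
  have hNS : N ∉ S := fun h => by
    have := aux_le S m (N % m) N h (by simp)
    omega
  generalize hT' : gen (insert N (msg S)) = T at *
  have hT : IsNumSgp T := by
    refine ⟨hsub 0 hM.1, hadd, hM.2.2.subset ?_⟩
    intro x hx hxS
    exact hx (hsub x hxS)
  have hmult : nsMult T = m := by
    apply le_antisymm
    · exact Nat.sInf_le (s := {x | x ∈ T ∧ x ≠ 0}) ⟨hsub m hmS, hm0.ne'⟩
    · refine le_csInf (s := {x | x ∈ T ∧ x ≠ 0}) ⟨m, hsub m hmS, hm0.ne'⟩ ?_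
      rintro x ⟨hx, hx0⟩
      rcases hlow x hx with h | h
      · exact hmin x h hx0
      · omega
  refine ⟨⟨hT, ?_⟩, ?_⟩
  · rw [hmult]
    have key : ∀ j, j + 1 < m → aperyW T m j < aperyW T m (j + 1) := by
      intro j
      induction j using Nat.strong_induction_on with
      | _ j ih =>
        intro hj
        obtain ⟨h1, h2⟩ := aux_w T hT m (j+1) hm0
        rw [Nat.mod_eq_of_lt hj] at h2
        have hne : aperyW T m (j+1) ≠ 0 := by
          intro h; rw [h] at h2; simp at h2
        by_cases hj0 : j = 0
        · subst hj0
          have := aux_le T m 0 0 (hsub 0 hM.1) rfl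
          omega
        by_cases hjr : j + 1 ≤ N % m
        · have a1 := aux_w S hM m j hm0
          have a2 := aux_le T m j _ (hsub _ a1.1) a1.2
          have a3 := hW j (by omega) hj
          rcases hlow _ h1 with h | h
          · have := aux_le S m (j+1) _ h (by rw [h2, Nat.mod_eq_of_lt hj])
            omega
          · rcases Nat.lt_or_ge j (N % m - 1) with hl | hl
            · have := aux_mono S m hW j (by omega) (N % m - 1) hl (by omega)
              omega
            · have : j = N % m - 1 := by omega
              rw [← this] at hN3
              omega
        · obtain ⟨g, hg, hg0, x, hx, hgx⟩ := hdec _ h1 hne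
          have hgr := hres g hg
          by_cases hgm : g % m = 0
          · have := aux_le T m (j+1) x hx (by
              rw [Nat.mod_eq_of_lt hj, ← h2, hgx, Nat.add_mod, hgm]; simp)
            omega
          have hglt : g % m < m := Nat.mod_lt _ hm0
          -- residue of x
          have hxr : x % m = j + 1 - g % m := by
            have hxlt : x % m < m := Nat.mod_lt _ hm0
            rw [hgx, Nat.add_mod] at h2
            rcases Nat.lt_or_ge (g % m + x % m) m with hc | hc
            · rw [Nat.mod_eq_of_lt hc] at h2; omega
            · rw [Nat.mod_eq_sub_mod hc, Nat.mod_eq_of_lt (by omega)] at h2; omega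
          have h5 := ih (j - g % m) (by omega) (by omega)
          have h6 := aux_w T hT m (j - g % m) hm0
          have h7 := aux_le T m (j - g % m + 1) x hx (by
            rw [Nat.mod_eq_of_lt (a := j - g % m + 1) (by omega), hxr]; omega)
          have h8 := aux_le T m j (g + aperyW T m (j - g % m)) (hadd _ (hins hg) _ h6.1) (by
            rw [Nat.add_mod, h6.2, Nat.mod_eq_of_lt (a := j - g % m) (by omega)]
            congr 1; omega)
          omega
    intro i _ hi
    exact key i hi
  · ext x
    constructor
    · rintro ⟨hx, hx0, hirr⟩
      obtain ⟨g, hg, hg0, y, hy, hgy⟩ := hdec x hx hx0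
      by_cases hy0 : y = 0
      · subst hy0; simp at hgy; subst hgy; exact hg
      · exact absurd hgy (hirr g (hins hg) hg0 y hy hy0)
    · intro hx
      have hxN : x ≤ N := by
        rcases hx with rfl | h
        · rfl
        · exact (hmax x h).trans hN1.le
      refine ⟨hins hx, ?_, ?_⟩
      · rcases hx with rfl | h
        · omega
        · exact h.2.1
      · intro a ha ha0 b hb hb0 hab
        have haS : a ∈ S := (hlow a ha).resolve_right (by omega)
        have hbS : b ∈ S := (hlow b hb).resolve_right (by omega)
        rcases hx with rfl | h
        · exact hNS (hab ▸ hM.2.1 a haS b hbS)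
        · exact h.2.2 a haS ha0 b hbS hb0 hab

theorem stmt16 (S : Set ℕ) (e : ℕ) (he : 2 ≤ e) (n : Fin e → ℕ)
    (hen : e ≤ n ⟨0, by omega⟩ - 1)
    (hmono : StrictMono n) (hmsg : msg S = Set.range n) (hM : IsMANS S)
    (N : ℕ) (hN1 : n ⟨e - 1, by omega⟩ < N)
    (hN2 : n ⟨e - 1, by omega⟩ % n ⟨0, by omega⟩ < N % n ⟨0, by omega⟩)
    (hN3 : aperyW S (n ⟨0, by omega⟩) (N % n ⟨0, by omega⟩ - 1) < N)
    (hN4 : N < aperyW S (n ⟨0, by omega⟩) (N % n ⟨0, by omega⟩)) :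
    IsMANS (gen (insert N (Set.range n))) ∧
      (msg (gen (insert N (Set.range n)))).ncard = (msg S).ncard + 1 := by
  have hin : ∀ i, n i ∈ msg S := fun i => hmsg ▸ Set.mem_range_self i
  have hm0 : 0 < n ⟨0, by omega⟩ := by omega
  have hmS := (hin ⟨0, by omega⟩).1
  have hmax : ∀ x ∈ msg S, x ≤ n ⟨e - 1, by omega⟩ := by
    rw [hmsg]
    rintro _ ⟨i, rfl⟩
    exact hmono.monotone (by rw [Fin.le_def]; show i.1 ≤ e - 1; omega)
  have hmult : nsMult S = n ⟨0, by omega⟩ := by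
    have hmem : nsMult S ∈ S ∧ nsMult S ≠ 0 :=
      Nat.sInf_mem (s := {x | x ∈ S ∧ x ≠ 0}) ⟨_, hmS, hm0.ne'⟩
    have hle : ∀ x ∈ S, x ≠ 0 → nsMult S ≤ x := fun x h h0 =>
      Nat.sInf_le (s := {x | x ∈ S ∧ x ≠ 0}) ⟨h, h0⟩
    apply le_antisymm (hle _ hmS hm0.ne')
    have hg : nsMult S ∈ msg S := by
      refine ⟨hmem.1, hmem.2, ?_⟩
      intro a ha ha0 b hb hb0 hab
      have := hle a ha ha0
      omega
    rw [hmsg] at hg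
    obtain ⟨i, hi⟩ := hg
    rw [← hi]
    exact hmono.monotone (by rw [Fin.le_def]; exact Nat.zero_le _)
  have hmin : ∀ x ∈ S, x ≠ 0 → n ⟨0, by omega⟩ ≤ x := by
    intro x h h0
    rw [← hmult]
    exact Nat.sInf_le (s := {x | x ∈ S ∧ x ≠ 0}) ⟨h, h0⟩
  have hW := hM.2
  rw [hmult] at hW
  obtain ⟨r1, r2⟩ := aux_main S _ _ N hM.1 hm0 hmin hmS (hin ⟨e - 1, by omega⟩)
    (hmono (by rw [Fin.lt_def]; show 0 < e - 1; omega)) hmax hW hN1 hN2 hN3 hN4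
  rw [← hmsg]
  refine ⟨r1, ?_⟩
  rw [r2]
  refine Set.ncard_insert_of_notMem ?_ (by rw [hmsg]; exact Set.finite_range n)
  intro h
  have := hmax N h
  omega
end
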